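/- arXiv:2211.03751 — 9 statements merged into one kernel-verified Lean document; each statement's English description precedes it below -/
import Mathlib

section
/- Let A ∈ ℂ^{p×p} be a nonzero positive semidefinite matrix, let 1 ≤ q ≤ p, set α = q/p, and let λ > 0. Suppose μ > 0 satisfies the fixed-point equation λ = μ(1 − (1/q) tr[A (A + μ I_p)⁻¹]) and γ > 0 satisfies (1/p) tr[(A + γ I_p)⁻¹] · (γ − αλ) = 1 − α. Then γ < μ. (That is, the effective regularization induced by an orthogonal sketch is strictly smaller than that induced by an i.i.d. sketch with the same sketch size and explicit regularization.) -/
open Matrix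
open scoped ComplexOrder

lemma trace_resolvent {p : ℕ} (A : Matrix (Fin p) (Fin p) ℂ)
    (hA : A.PosSemidef) (x : ℝ) (hx : 0 < x) :
    (A + (x : ℂ) • 1) * (A + (x : ℂ) • 1)⁻¹ = 1 ∧
    (Matrix.trace ((A + (x : ℂ) • 1)⁻¹)).re = ∑ i, (hA.1.eigenvalues i + x)⁻¹ := by
  set a := hA.1.eigenvalues with ha
  have hpos : ∀ i, 0 < a i + x := fun i => add_pos_of_nonneg_of_pos (hA.eigenvalues_nonneg i) hx
  set U : Matrix (Fin p) (Fin p) ℂ := (hA.1.eigenvectorUnitary : Matrix (Fin p) (Fin p) ℂ) with hU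
  have h1 : U * star U = 1 := Unitary.mul_star_self_of_mem hA.1.eigenvectorUnitary.2
  have h2 : star U * U = 1 := Unitary.star_mul_self_of_mem hA.1.eigenvectorUnitary.2
  have hs : A = U * diagonal (fun i => (a i : ℂ)) * star U := by
    have := hA.1.spectral_theorem
    rw [Unitary.conjStarAlgAut_apply] at this
    exact this
  have hB : A + (x : ℂ) • 1 = U * diagonal (fun i => ((a i + x : ℝ) : ℂ)) * star U := by
    have : diagonal (fun i => ((a i + x : ℝ) : ℂ))
        = diagonal (fun i => (a i : ℂ)) + (x : ℂ) • (1 : Matrix (Fin p) (Fin p) ℂ) := by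
      rw [← diagonal_one, ← diagonal_smul, diagonal_add]
      congr 1; ext i; simp
    rw [this, mul_add, add_mul, ← hs]
    simp [h1]
  have hinv : (A + (x : ℂ) • 1) * (U * diagonal (fun i => (((a i + x)⁻¹ : ℝ) : ℂ)) * star U) = 1 := by
    rw [hB]
    calc _ = U * (diagonal (fun i => ((a i + x : ℝ) : ℂ)) * (star U * U) *
            diagonal (fun i => (((a i + x)⁻¹ : ℝ) : ℂ))) * star U := by
          simp only [mul_assoc]
      _ = 1 := by
          rw [h2, mul_one, diagonal_mul_diagonal]
          have : (fun i => ((a i + x : ℝ) : ℂ) * (((a i + x)⁻¹ : ℝ) : ℂ)) = fun _ => 1 := by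
            ext i
            rw [← Complex.ofReal_mul, mul_inv_cancel₀ (hpos i).ne', Complex.ofReal_one]
          rw [this, diagonal_one, mul_one, h1]
  have he := Matrix.inv_eq_right_inv hinv
  refine ⟨by rw [he, hinv], ?_⟩
  rw [he, Matrix.trace_mul_comm, ← mul_assoc, h2, one_mul, trace_diagonal, Complex.re_sum]
  simp only [Complex.ofReal_re]

theorem stmt5 {p : ℕ} (A : Matrix (Fin p) (Fin p) ℂ)
    (hA : A.PosSemidef) (hA0 : A ≠ 0)
    (q : ℕ) (hq1 : 1 ≤ q) (hqp : q ≤ p)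
    (lam : ℝ) (hlam : 0 < lam)
    (μ γ : ℝ) (hμpos : 0 < μ) (hγpos : 0 < γ)
    (hμeq : lam = μ * (1 - (q : ℝ)⁻¹ * (Matrix.trace (A * (A + (μ : ℂ) • 1)⁻¹)).re))
    (hγeq : (p : ℝ)⁻¹ * (Matrix.trace ((A + (γ : ℂ) • 1)⁻¹)).re * (γ - (q : ℝ) / p * lam)
        = 1 - (q : ℝ) / p) :
    γ < μ := by
  obtain ⟨hm1, hm2⟩ := trace_resolvent A hA μ hμpos
  obtain ⟨-, hg2⟩ := trace_resolvent A hA γ hγpos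
  have hq : (0 : ℝ) < q := by exact_mod_cast hq1
  have hp : (0 : ℝ) < p := by exact_mod_cast (lt_of_lt_of_le hq1 hqp)
  have htr : (Matrix.trace (A * (A + (μ : ℂ) • 1)⁻¹)).re
      = p - μ * ∑ i, (hA.1.eigenvalues i + μ)⁻¹ := by
    have : A * (A + (μ : ℂ) • 1)⁻¹ = 1 - (μ : ℂ) • (A + (μ : ℂ) • 1)⁻¹ := by
      rw [eq_sub_iff_add_eq]
      rw [add_mul, smul_mul_assoc, one_mul] at hm1
      exact hm1
    rw [this, trace_sub, trace_smul, trace_one, ← hm2]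
    simp
  rw [htr] at hμeq
  rw [hg2] at hγeq
  have hnn := hA.eigenvalues_nonneg
  have hex : ∃ i, 0 < hA.1.eigenvalues i := by
    by_contra! h
    exact hA0 (hA.1.eigenvalues_eq_zero_iff.1 (funext fun i => le_antisymm (h i) (hnn i)))
  generalize hA.1.eigenvalues = a at *
  set G := ∑ i, (a i + μ)⁻¹ with hG
  set H := ∑ i, (a i + γ)⁻¹ with hH
  have hlt : μ * G < p := by
    have : ∑ i, μ * (a i + μ)⁻¹ < ∑ i : Fin p, (1 : ℝ) := by
      obtain ⟨j, hj⟩ := hex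
      refine Finset.sum_lt_sum (fun i _ => ?_) ⟨j, Finset.mem_univ _, ?_⟩
      · rw [← div_eq_mul_inv, div_le_one (by linarith [hnn i])]; linarith [hnn i]
      · rw [← div_eq_mul_inv, div_lt_one (by linarith)]; linarith
    rw [← Finset.mul_sum] at this
    simpa using this
  set c := (q : ℝ) / p * lam with hc
  have hcpos : 0 < c := by positivity
  have e1 : p * c = μ * (q - p + μ * G) := by
    rw [hc, hμeq]; field_simp; ring
  have e2 : H * (γ - c) = p - q := by
    field_simp at hγeq; linarith
  by_contra! hle
  have hmono : G * (μ - c) ≤ H * (γ - c) := by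
    rw [hG, hH, Finset.sum_mul, Finset.sum_mul]
    refine Finset.sum_le_sum fun i _ => ?_
    have := hnn i
    rw [inv_mul_eq_div, inv_mul_eq_div, div_le_div_iff₀ (by linarith) (by linarith)]
    nlinarith [mul_nonneg (add_nonneg this hcpos.le) (sub_nonneg.2 hle)]
  have ht : 0 < q - p + μ * G := by
    by_contra! h
    nlinarith [mul_pos hp hcpos]
  have key : p * (G * (μ - c) - (p - q)) = (p - μ * G) * (q - p + μ * G) := by
    linear_combination (-G) * e1
  have := mul_pos (sub_pos.2 hlt) ht
  nlinarith
end

section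
/- Let A ∈ ℂ^{p×p} be a nonzero positive semidefinite matrix. The function f(μ) = (1/p) Σ_{i: λ_i(A)>0} λ_i(A)² / (λ_i(A) + μ)² is strictly decreasing on the interval (−λ_min⁺(A), ∞), with f(μ) → ∞ as μ ↘ −λ_min⁺(A) and f(μ) → 0 as μ → ∞. Consequently, for every α > 0 there is a unique μ₀(α) ∈ (−λ_min⁺(A), ∞) with f(μ₀(α)) = α; the map α ↦ μ₀(α) is strictly decreasing, μ₀(α) → ∞ as α ↘ 0, and μ₀(α) → −λ_min⁺(A) as α → ∞. -/
open Matrix Filter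
open scoped ComplexOrder

/-- The smallest positive eigenvalue `λ_min⁺` of a Hermitian matrix. -/
noncomputable def lminp {p : ℕ} {A : Matrix (Fin p) (Fin p) ℂ} (hA : A.IsHermitian) : ℝ :=
  sInf {x : ℝ | 0 < x ∧ ∃ i, hA.eigenvalues i = x}

/-- The spectral sum `Σ_{i : eᵢ > 0} eᵢ / (eᵢ + μ)`; for a positive semidefinite matrix with
eigenvalues `e` and `A + μ I` invertible this equals `tr[A (A + μ I)⁻¹]`. -/
noncomputable def specSum1 {p : ℕ} (e : Fin p → ℝ) (μ : ℝ) : ℝ :=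
  ∑ i, if 0 < e i then e i / (e i + μ) else 0

/-- The spectral sum `Σ_{i : eᵢ > 0} eᵢ² / (eᵢ + μ)²`; for a positive semidefinite matrix with
eigenvalues `e` and `A + μ I` invertible this equals `tr[A² (A + μ I)⁻²]`. -/
noncomputable def specSum2 {p : ℕ} (e : Fin p → ℝ) (μ : ℝ) : ℝ :=
  ∑ i, if 0 < e i then (e i) ^ 2 / (e i + μ) ^ 2 else 0

theorem aux_inverse (f : ℝ → ℝ) (a : ℝ) (hs : StrictAntiOn f (Set.Ioi a))
    (hc : ContinuousOn f (Set.Ioi a)) (hp : ∀ x, a < x → 0 < f x)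
    (h1 : Tendsto f (nhdsWithin a (Set.Ioi a)) atTop) (h2 : Tendsto f atTop (nhds 0)) :
    (∀ α : ℝ, 0 < α → ∃! μ₀ : ℝ, μ₀ ∈ Set.Ioi a ∧ f μ₀ = α)
    ∧ ∀ m : ℝ → ℝ, (∀ α : ℝ, 0 < α → m α ∈ Set.Ioi a ∧ f (m α) = α) →
        StrictAntiOn m (Set.Ioi 0)
        ∧ Tendsto m (nhdsWithin 0 (Set.Ioi 0)) atTop
        ∧ Tendsto m atTop (nhds a) := by
  constructor
  · intro α hα
    obtain ⟨x, hx, hxa⟩ := ((h1.eventually_ge_atTop α).and self_mem_nhdsWithin).exists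
    obtain ⟨y, hy, hya⟩ := ((h2.eventually (gt_mem_nhds hα)).and (eventually_gt_atTop a)).exists
    obtain ⟨z, hz, hzf⟩ := (isPreconnected_Ioi (a := a)).intermediate_value hya hxa hc
      ⟨le_of_lt hy, hx⟩
    refine ⟨z, ⟨hz, hzf⟩, ?_⟩
    rintro w ⟨hw, hwf⟩
    exact hs.injOn hw hz (hwf.trans hzf.symm)
  · intro m hm
    have key : ∀ α, 0 < α → ∀ x, a < x → (α < f x → x < m α) ∧ (f x < α → m α < x) := by
      intro α hα x hx
      obtain ⟨h3, h4⟩ := hm α hα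
      constructor
      · intro h
        rw [← h4] at h
        exact (hs.lt_iff_gt h3 hx).1 h
      · intro h
        rw [← h4] at h
        exact (hs.lt_iff_gt hx h3).1 h
    refine ⟨?_, ?_, ?_⟩
    · intro α hα β hβ hab
      refine (key β hβ (m α) (hm α hα).1).2 ?_
      rw [(hm α hα).2]
      exact hab
    · rw [tendsto_atTop]
      intro M
      have hM : a < max M (a + 1) := lt_of_lt_of_le (by linarith) (le_max_right _ _)
      filter_upwards [Ioo_mem_nhdsGT (hp _ hM)] with α hα
      exact (le_max_left _ _).trans ((key α hα.1 _ hM).1 hα.2).le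
    · rw [tendsto_order]
      constructor
      · intro b hb
        filter_upwards [eventually_gt_atTop 0] with α hα
        exact hb.trans (hm α hα).1
      · intro b hb
        filter_upwards [eventually_gt_atTop 0, eventually_gt_atTop (f b)] with α hα hα2
        exact (key α hα b hb).2 hα2

theorem aux_term_pos {l x μ : ℝ} (hx : 0 < x) (hl : l ≤ x) (hμ : -l < μ) :
    0 < x ^ 2 / (x + μ) ^ 2 := by
  have : 0 < x + μ := by linarith
  positivity

theorem aux_term_lt {l x μ ν : ℝ} (hx : 0 < x) (hl : l ≤ x) (hμ : -l < μ) (h : μ < ν) :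
    x ^ 2 / (x + ν) ^ 2 < x ^ 2 / (x + μ) ^ 2 := by
  have : 0 < x + μ := by linarith
  gcongr

theorem aux_sum {p : ℕ} (e : Fin p → ℝ) (j : Fin p) (hj : 0 < e j)
    (hmin : ∀ i, 0 < e i → e j ≤ e i) :
    StrictAntiOn (fun μ : ℝ => (p : ℝ)⁻¹ * specSum2 e μ) (Set.Ioi (-(e j)))
    ∧ ContinuousOn (fun μ : ℝ => (p : ℝ)⁻¹ * specSum2 e μ) (Set.Ioi (-(e j)))
    ∧ (∀ μ, -(e j) < μ → 0 < (p : ℝ)⁻¹ * specSum2 e μ)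
    ∧ Tendsto (fun μ : ℝ => (p : ℝ)⁻¹ * specSum2 e μ)
        (nhdsWithin (-(e j)) (Set.Ioi (-(e j)))) atTop
    ∧ Tendsto (fun μ : ℝ => (p : ℝ)⁻¹ * specSum2 e μ) atTop (nhds 0) := by
  have hp : 0 < (p : ℝ)⁻¹ := by
    have : 0 < p := j.pos
    positivity
  have hge : ∀ μ, -(e j) < μ → e j ^ 2 / (e j + μ) ^ 2 ≤ specSum2 e μ := by
    intro μ hμ
    have := Finset.single_le_sum (f := fun i => if 0 < e i then (e i) ^ 2 / (e i + μ) ^ 2 else 0)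
      (s := Finset.univ) (fun i _ => by
        split_ifs with h
        · exact (aux_term_pos h (hmin i h) hμ).le
        · exact le_rfl) (Finset.mem_univ j)
    simpa [hj, specSum2] using this
  refine ⟨?_, ?_, ?_, ?_, ?_⟩
  · intro μ hμ ν hν h
    refine mul_lt_mul_of_pos_left ?_ hp
    refine Finset.sum_lt_sum (fun i _ => ?_) ⟨j, Finset.mem_univ j, ?_⟩
    · split_ifs with hi
      · exact (aux_term_lt hi (hmin i hi) hμ h).le
      · exact le_rfl
    · rw [if_pos hj, if_pos hj]
      exact aux_term_lt hj le_rfl hμ h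
  · refine continuousOn_const.mul ?_
    refine continuousOn_finsetSum _ (fun i _ => ?_)
    by_cases hi : 0 < e i
    · simp only [hi, if_true]
      refine ContinuousOn.div (by fun_prop) (by fun_prop) ?_
      intro μ hμ
      have h1 := hmin i hi
      have h2 : -(e j) < μ := hμ
      have : 0 < e i + μ := by linarith
      positivity
    · simp only [hi, if_false]
      exact continuousOn_const
  · intro μ hμ
    exact mul_pos hp ((aux_term_pos hj le_rfl hμ).trans_le (hge μ hμ))
  · refine Tendsto.const_mul_atTop hp ?_
    refine tendsto_atTop_mono' _ (f₁ := fun μ => e j ^ 2 / (e j + μ) ^ 2) ?_ ?_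
    · filter_upwards [self_mem_nhdsWithin] with μ hμ
      exact hge μ hμ
    · simp only [div_eq_mul_inv]
      refine Tendsto.const_mul_atTop (by positivity) ?_
      refine Tendsto.inv_tendsto_nhdsGT_zero ?_
      rw [tendsto_nhdsWithin_iff]
      constructor
      · have : Tendsto (fun μ : ℝ => (e j + μ) ^ 2) (nhds (-(e j))) (nhds ((e j + -(e j)) ^ 2)) :=
          Continuous.tendsto (by fun_prop) _
        simp only [add_neg_cancel, ne_eq, OfNat.ofNat_ne_zero, not_false_eq_true, zero_pow] at this
        exact this.mono_left nhdsWithin_le_nhds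
      · filter_upwards [self_mem_nhdsWithin] with μ hμ
        have h2 : -(e j) < μ := hμ
        have : 0 < e j + μ := by linarith
        exact pow_pos this 2
  · rw [← mul_zero (p : ℝ)⁻¹]
    refine Tendsto.const_mul _ ?_
    have h0 : (0 : ℝ) = ∑ i : Fin p, (0 : ℝ) := by simp
    rw [h0]
    refine tendsto_finsetSum _ (fun i _ => ?_)
    by_cases hi : 0 < e i
    · simp only [hi, if_true]
      refine Tendsto.const_div_atTop ?_ _
      exact (tendsto_pow_atTop two_ne_zero).comp (tendsto_atTop_add_const_left _ _ tendsto_id)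
    · simp only [hi, if_false]
      exact tendsto_const_nhds

theorem aux_lminp {p : ℕ} (A : Matrix (Fin p) (Fin p) ℂ)
    (hA : A.PosSemidef) (hA0 : A ≠ 0) :
    ∃ j, 0 < hA.1.eigenvalues j ∧ lminp hA.1 = hA.1.eigenvalues j ∧
      ∀ i, 0 < hA.1.eigenvalues i → hA.1.eigenvalues j ≤ hA.1.eigenvalues i := by
  have hne : ∃ i, 0 < hA.1.eigenvalues i := by
    by_contra! h
    apply hA0
    rw [← hA.1.eigenvalues_eq_zero_iff]
    funext i
    exact le_antisymm (h i) (hA.eigenvalues_nonneg i)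
  obtain ⟨k, hk⟩ := hne
  obtain ⟨j, hj, hjmin⟩ := Finset.exists_min_image
    (Finset.univ.filter fun i => 0 < hA.1.eigenvalues i) hA.1.eigenvalues ⟨k, by simpa using hk⟩
  simp only [Finset.mem_filter, Finset.mem_univ, true_and] at hj hjmin
  refine ⟨j, hj, ?_, hjmin⟩
  refine IsLeast.csInf_eq ⟨⟨hj, j, rfl⟩, ?_⟩
  rintro x ⟨hx, i, rfl⟩
  exact hjmin i hx

/-- Properties of `f(μ) = (1/p) tr[A² (A + μ I)⁻²]` (cf. Remark 5.1): `f` is strictly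
decreasing on `(-λ_min⁺(A), ∞)`, tends to `∞` at `-λ_min⁺(A)` and to `0` at `∞`; for every
`α > 0` there is a unique `μ₀(α)` with `f(μ₀(α)) = α`, and `α ↦ μ₀(α)` is strictly
decreasing with `μ₀(α) → ∞` as `α ↘ 0` and `μ₀(α) → -λ_min⁺(A)` as `α → ∞`. -/
theorem stmt9 {p : ℕ} (A : Matrix (Fin p) (Fin p) ℂ)
    (hA : A.PosSemidef) (hA0 : A ≠ 0) :
    StrictAntiOn (fun μ : ℝ => (p : ℝ)⁻¹ * specSum2 hA.1.eigenvalues μ)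
      (Set.Ioi (-(lminp hA.1)))
    ∧ Tendsto (fun μ : ℝ => (p : ℝ)⁻¹ * specSum2 hA.1.eigenvalues μ)
        (nhdsWithin (-(lminp hA.1)) (Set.Ioi (-(lminp hA.1)))) atTop
    ∧ Tendsto (fun μ : ℝ => (p : ℝ)⁻¹ * specSum2 hA.1.eigenvalues μ) atTop (nhds 0)
    ∧ (∀ α : ℝ, 0 < α → ∃! μ₀ : ℝ, μ₀ ∈ Set.Ioi (-(lminp hA.1)) ∧
        (p : ℝ)⁻¹ * specSum2 hA.1.eigenvalues μ₀ = α)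
    ∧ ∀ m : ℝ → ℝ,
        (∀ α : ℝ, 0 < α → m α ∈ Set.Ioi (-(lminp hA.1)) ∧
          (p : ℝ)⁻¹ * specSum2 hA.1.eigenvalues (m α) = α) →
        StrictAntiOn m (Set.Ioi 0)
        ∧ Tendsto m (nhdsWithin 0 (Set.Ioi 0)) atTop
        ∧ Tendsto m atTop (nhds (-(lminp hA.1))) := by
  obtain ⟨j, hj, hl, hmin⟩ := aux_lminp A hA hA0
  rw [hl]
  obtain ⟨h1, h2, h3, h4, h5⟩ := aux_sum hA.1.eigenvalues j hj hmin
  exact ⟨h1, h4, h5, aux_inverse _ _ h1 h2 h3 h4 h5⟩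
end

section
/- Let A ∈ ℂ^{p×p} be a nonzero positive semidefinite matrix with relative rank r(A) = rank(A)/p, let α > 0, let μ₀ = μ₀(α) be the unique solution in (−λ_min⁺(A), ∞) of α = (1/p) Σ_{i: λ_i(A)>0} λ_i(A)²/(λ_i(A)+μ₀)², and let λ₀ = μ₀ (1 − (1/(αp)) Σ_{i: λ_i(A)>0} λ_i(A)/(λ_i(A)+μ₀)). Then: if α > r(A) then μ₀ < 0 and λ₀ < 0; if α = r(A) then μ₀ = 0 and λ₀ = 0; and if α < r(A) then μ₀ > 0 and λ₀ < 0. -/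
open Matrix Filter
open scoped ComplexOrder

/-- Termwise comparison of sums over positive entries. -/
lemma spec_sum_lt {p : ℕ} (e : Fin p → ℝ) (f g : Fin p → ℝ) (hex : ∃ i, 0 < e i)
    (h : ∀ i, 0 < e i → f i < g i) :
    (∑ i, if 0 < e i then f i else 0) < ∑ i, if 0 < e i then g i else 0 := by
  obtain ⟨j, hj⟩ := hex
  apply Finset.sum_lt_sum
  · intro i _
    split_ifs with hi
    · exact (h i hi).le
    · exact le_rfl
  · exact ⟨j, Finset.mem_univ j, by simpa [hj] using h j hj⟩

/-- Joint sign patterns of `μ₀` and `λ₀` (Remark 5.2): if `α > r(A)` then `μ₀ < 0` and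
`λ₀ < 0`; if `α = r(A)` then `μ₀ = λ₀ = 0`; if `α < r(A)` then `μ₀ > 0` and `λ₀ < 0`. -/
theorem stmt10 {p : ℕ} (A : Matrix (Fin p) (Fin p) ℂ)
    (hA : A.PosSemidef) (hA0 : A ≠ 0)
    (α : ℝ) (hα : 0 < α) (μ₀ lam₀ : ℝ)
    (hμ₀ : -(lminp hA.1) < μ₀ ∧ α = (p : ℝ)⁻¹ * specSum2 hA.1.eigenvalues μ₀)
    (hlam₀ : lam₀ = μ₀ * (1 - (α * p)⁻¹ * specSum1 hA.1.eigenvalues μ₀)) :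
    (((A.rank : ℝ) / p < α → μ₀ < 0 ∧ lam₀ < 0)
    ∧ (α = (A.rank : ℝ) / p → μ₀ = 0 ∧ lam₀ = 0)
    ∧ (α < (A.rank : ℝ) / p → 0 < μ₀ ∧ lam₀ < 0)) := by
  obtain ⟨hμ, hαe⟩ := hμ₀
  have hp : (0 : ℝ) < p := by
    rcases Nat.eq_zero_or_pos p with h | h
    · subst h
      simp at hαe
      linarith
    · exact_mod_cast h
  have hrank : (A.rank : ℝ) = ∑ i, if 0 < hA.1.eigenvalues i then (1 : ℝ) else 0 := by
    rw [hA.1.rank_eq_card_non_zero_eigs, Fintype.card_subtype, Finset.sum_boole]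
    congr 2
    ext i
    simp only [Finset.mem_filter, Finset.mem_univ, true_and]
    exact ⟨fun h => lt_of_le_of_ne (hA.eigenvalues_nonneg i) (Ne.symm h), fun h => h.ne'⟩
  have hex : ∃ i, 0 < hA.1.eigenvalues i := by
    by_contra hcon
    push Not at hcon
    apply hA0
    rw [← hA.1.eigenvalues_eq_zero_iff]
    funext i
    exact le_antisymm (hcon i) (hA.eigenvalues_nonneg i)
  have hmin : ∀ i, 0 < hA.1.eigenvalues i → 0 < hA.1.eigenvalues i + μ₀ := by
    intro i hi
    have : lminp hA.1 ≤ hA.1.eigenvalues i :=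
      csInf_le ⟨0, fun x hx => hx.1.le⟩ ⟨hi, i, rfl⟩
    linarith
  have hS2 : α * p = specSum2 hA.1.eigenvalues μ₀ := by
    rw [hαe]
    field_simp
  have hS2pos : 0 < specSum2 hA.1.eigenvalues μ₀ := hS2 ▸ mul_pos hα hp
  rw [hS2] at hlam₀
  rw [div_lt_iff₀ hp, eq_div_iff hp.ne', lt_div_iff₀ hp, hS2, hrank]
  generalize hA.1.eigenvalues = e at *
  rcases lt_trichotomy μ₀ 0 with hneg | hzero | hpos
  · have h1 : (∑ i, if 0 < e i then (1 : ℝ) else 0) < specSum2 e μ₀ := by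
      apply spec_sum_lt e _ _ hex
      intro i hi
      have := hmin i hi
      rw [lt_div_iff₀ (by positivity)]
      nlinarith
    have h2 : specSum1 e μ₀ < specSum2 e μ₀ := by
      apply spec_sum_lt e _ _ hex
      intro i hi
      have := hmin i hi
      rw [div_lt_div_iff₀ this (by positivity)]
      have h3 : 0 < e i * (e i + μ₀) := by positivity
      nlinarith
    have h3 : (specSum2 e μ₀)⁻¹ * specSum1 e μ₀ < 1 := by
      rw [inv_mul_lt_iff₀ hS2pos]
      linarith
    refine ⟨fun _ => ⟨hneg, ?_⟩, fun h => absurd h h1.ne', fun h => absurd h h1.not_gt⟩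
    rw [hlam₀]
    exact mul_neg_of_neg_of_pos hneg (by linarith)
  · have h1 : specSum2 e μ₀ = ∑ i, if 0 < e i then (1 : ℝ) else 0 := by
      apply Finset.sum_congr rfl
      intro i _
      split_ifs with hi
      · rw [hzero, add_zero]
        exact div_self (by positivity)
      · rfl
    refine ⟨fun h => absurd h1 h.ne', fun _ => ⟨hzero, ?_⟩, fun h => absurd h1 h.ne⟩
    rw [hlam₀, hzero, zero_mul]
  · have h1 : specSum2 e μ₀ < (∑ i, if 0 < e i then (1 : ℝ) else 0) := by
      apply spec_sum_lt e _ _ hex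
      intro i hi
      have := hmin i hi
      rw [div_lt_iff₀ (by positivity)]
      nlinarith
    have h2 : specSum2 e μ₀ < specSum1 e μ₀ := by
      apply spec_sum_lt e _ _ hex
      intro i hi
      have := hmin i hi
      rw [div_lt_div_iff₀ (by positivity) this]
      have h3 : 0 < e i * (e i + μ₀) := by positivity
      nlinarith
    have h3 : 1 < (specSum2 e μ₀)⁻¹ * specSum1 e μ₀ := by
      rw [lt_inv_mul_iff₀ hS2pos]
      linarith
    refine ⟨fun h => absurd h h1.not_gt, fun h => absurd h h1.ne, fun _ => ⟨hpos, ?_⟩⟩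
    rw [hlam₀]
    exact mul_neg_of_pos_of_neg hpos (by linarith)
end

section
/- Let A ∈ ℂ^{p×p} be a nonzero positive semidefinite matrix with relative rank r(A) = rank(A)/p, and for α > 0 let μ₀(α) be the unique solution in (−λ_min⁺(A), ∞) of α = (1/p) Σ_{i: λ_i(A)>0} λ_i(A)²/(λ_i(A)+μ₀)², and λ₀(α) = μ₀(α)(1 − (1/(αp)) Σ_{i: λ_i(A)>0} λ_i(A)/(λ_i(A)+μ₀(α))). Then: on (0, r(A)) the map α ↦ λ₀(α) is strictly increasing with λ₀(α) → −∞ as α ↘ 0 and λ₀(α) → 0 as α ↗ r(A); λ₀(r(A)) = 0; and on (r(A), ∞) the map α ↦ λ₀(α) is strictly decreasing with λ₀(α) → −λ_min⁺(A) as α → ∞. -/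
open Matrix Filter
open scoped ComplexOrder

lemma ss_tangent {p : ℕ} (e : Fin p → ℝ) (m : ℝ) (hm : ∀ i, 0 < e i → m ≤ e i)
    (μ ν : ℝ) (hμ : -m < μ) (hν : -m < ν) :
    ν * specSum1 e ν ≤ μ * specSum1 e μ + (ν - μ) * specSum2 e μ := by
  unfold specSum1 specSum2
  rw [Finset.mul_sum, Finset.mul_sum, Finset.mul_sum, ← Finset.sum_add_distrib]
  refine Finset.sum_le_sum fun i _ => ?_
  split_ifs with h
  · have ha : 0 < e i + μ := by linarith [hm i h]
    have hb : 0 < e i + ν := by linarith [hm i h]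
    have key : μ * (e i / (e i + μ)) + (ν - μ) * (e i ^ 2 / (e i + μ) ^ 2) - ν * (e i / (e i + ν))
        = e i ^ 2 * (ν - μ) ^ 2 / ((e i + μ) ^ 2 * (e i + ν)) := by
      field_simp
      ring
    have : 0 ≤ e i ^ 2 * (ν - μ) ^ 2 / ((e i + μ) ^ 2 * (e i + ν)) := by positivity
    linarith
  · simp

lemma ss1_pos {p : ℕ} (e : Fin p → ℝ) (m : ℝ) (hm : ∀ i, 0 < e i → m ≤ e i)
    (hex : ∃ i, 0 < e i) (μ : ℝ) (hμ : -m < μ) : 0 < specSum1 e μ := by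
  unfold specSum1
  obtain ⟨j, hj⟩ := hex
  refine Finset.sum_pos' (fun i _ => ?_) ⟨j, Finset.mem_univ _, ?_⟩
  · split_ifs with h
    · have ha : 0 < e i + μ := by linarith [hm i h]
      positivity
    · exact le_rfl
  · have ha : 0 < e j + μ := by linarith [hm j hj]
    rw [if_pos hj]
    positivity

lemma ss2_anti {p : ℕ} (e : Fin p → ℝ) (m : ℝ) (hm : ∀ i, 0 < e i → m ≤ e i)
    (hex : ∃ i, 0 < e i) : StrictAntiOn (specSum2 e) (Set.Ioi (-m)) := by
  intro μ hμ ν hν hlt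
  simp only [Set.mem_Ioi] at hμ hν
  have key : ∀ i, 0 < e i → e i ^ 2 / (e i + ν) ^ 2 < e i ^ 2 / (e i + μ) ^ 2 := by
    intro i h
    have ha : 0 < e i + μ := by linarith [hm i h]
    have hb : 0 < e i + ν := by linarith [hm i h]
    gcongr
  unfold specSum2
  obtain ⟨j, hj⟩ := hex
  refine Finset.sum_lt_sum (fun i _ => ?_) ⟨j, Finset.mem_univ _, ?_⟩
  · split_ifs with h
    · exact (key i h).le
    · exact le_rfl
  · rw [if_pos hj, if_pos hj]
    exact key j hj

lemma ss_main {p : ℕ} (hp : 0 < (p : ℝ)) (e : Fin p → ℝ) (m : ℝ) (hm0 : 0 < m)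
    (hm : ∀ i, 0 < e i → m ≤ e i) (hex : ∃ i, 0 < e i)
    (r : ℝ) (hr : r * p = specSum2 e 0)
    (hr0 : 0 < r)
    (μ₀ lam₀ : ℝ → ℝ)
    (hμ₀ : ∀ α : ℝ, 0 < α → -m < μ₀ α ∧ α = (p : ℝ)⁻¹ * specSum2 e (μ₀ α))
    (hlam₀ : ∀ α : ℝ, 0 < α → lam₀ α = μ₀ α * (1 - (α * p)⁻¹ * specSum1 e (μ₀ α))) :
    StrictMonoOn lam₀ (Set.Ioo 0 r)
    ∧ Tendsto lam₀ (nhdsWithin 0 (Set.Ioi 0)) atBot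
    ∧ Tendsto lam₀ (nhdsWithin r (Set.Iio r)) (nhds 0)
    ∧ lam₀ r = 0
    ∧ StrictAntiOn lam₀ (Set.Ioi r)
    ∧ Tendsto lam₀ atTop (nhds (-m)) := by
  have hgt : ∀ α, 0 < α → -m < μ₀ α := fun α h => (hμ₀ α h).1
  have hS2 : ∀ α, 0 < α → specSum2 e (μ₀ α) = α * p := by
    intro α h
    have := (hμ₀ α h).2
    field_simp at this
    linarith
  have hanti := ss2_anti e m hm hex
  have h0m : -m < 0 := by linarith
  have hle : ∀ α ν, 0 < α → -m < ν → lam₀ α ≤ ν * (1 - (α * p)⁻¹ * specSum1 e ν) := by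
    intro α ν h hν
    rw [hlam₀ α h]
    have ht := ss_tangent e m hm (μ₀ α) ν (hgt α h) hν
    rw [hS2 α h] at ht
    have hap : 0 < α * p := by positivity
    have : (α * p)⁻¹ * (ν * specSum1 e ν) ≤
        (α * p)⁻¹ * (μ₀ α * specSum1 e (μ₀ α) + (ν - μ₀ α) * (α * p)) := by gcongr
    have h2 : (α * p)⁻¹ * (μ₀ α * specSum1 e (μ₀ α) + (ν - μ₀ α) * (α * p)) =
        (α * p)⁻¹ * (μ₀ α * specSum1 e (μ₀ α)) + (ν - μ₀ α) := by
      field_simp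
    linarith
  have hmono : ∀ α β, 0 < α → α < β → μ₀ β < μ₀ α := by
    intro α β h hlt
    have hb : 0 < β := h.trans hlt
    rw [← hanti.lt_iff_gt (hgt α h) (hgt β hb), hS2 α h, hS2 β hb]
    gcongr
  have hμr : μ₀ r = 0 := by
    apply hanti.injOn (hgt r hr0) h0m
    rw [hS2 r hr0, hr]
  have hpos : ∀ α, 0 < α → α < r → 0 < μ₀ α := fun α h hlt => hμr ▸ hmono α r h hlt
  have hneg : ∀ α, r < α → μ₀ α < 0 := fun α hlt => hμr ▸ hmono r α hr0 hlt
  have hs1 := ss1_pos e m hm hex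
  refine ⟨?_, ?_, ?_, ?_, ?_, ?_⟩
  · rintro α ⟨ha, har⟩ β ⟨hb, hbr⟩ hlt
    refine (hle α (μ₀ β) ha (hgt β hb)).trans_lt ?_
    rw [hlam₀ β hb]
    have h1 := hpos β hb hbr
    have h2 := hs1 (μ₀ β) (hgt β hb)
    gcongr
  · have h1 : Tendsto (fun α : ℝ => 1 + (-((p : ℝ)⁻¹ * specSum1 e 1)) * α⁻¹)
        (nhdsWithin 0 (Set.Ioi 0)) atBot := by
      apply tendsto_atBot_add_const_left
      apply Tendsto.const_mul_atTop_of_neg _ tendsto_inv_nhdsGT_zero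
      have := hs1 1 (by linarith)
      have : 0 < (p : ℝ)⁻¹ * specSum1 e 1 := by positivity
      linarith
    refine tendsto_atBot_mono' _ ?_ h1
    filter_upwards [self_mem_nhdsWithin] with α ha
    refine (hle α 1 ha (by linarith)).trans_eq ?_
    rw [mul_inv]
    ring
  · have hlow : Tendsto (fun α : ℝ => μ₀ (r / 2) * (1 - r * α⁻¹)) (nhdsWithin r (Set.Iio r))
        (nhds 0) := by
      have : ContinuousAt (fun α : ℝ => μ₀ (r / 2) * (1 - r * α⁻¹)) r := by
        have := hr0.ne'
        fun_prop (disch := assumption)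
      have h3 := this.tendsto
      rw [mul_inv_cancel₀ hr0.ne', sub_self, mul_zero] at h3
      exact h3.mono_left nhdsWithin_le_nhds
    have hI : Set.Ioo (r / 2) r ∈ nhdsWithin r (Set.Iio r) :=
      Ioo_mem_nhdsLT (by linarith)
    refine tendsto_of_tendsto_of_tendsto_of_le_of_le' hlow tendsto_const_nhds ?_ ?_
    · filter_upwards [hI] with α ha
      have ha0 : 0 < α := by linarith [ha.1]
      have h1 := hmono (r / 2) α (by linarith) ha.1
      have h2 := hpos α ha0 ha.2
      have ht := ss_tangent e m hm 0 (μ₀ α) h0m (hgt α ha0)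
      rw [← hr] at ht
      have hap : 0 < α * p := by positivity
      have h3 : (α * p)⁻¹ * (μ₀ α * specSum1 e (μ₀ α)) ≤ (α * p)⁻¹ * (μ₀ α * (r * p)) := by
        refine mul_le_mul_of_nonneg_left ?_ (by positivity)
        linarith
      have h4 : (α * p)⁻¹ * (μ₀ α * (r * p)) = μ₀ α * (r * α⁻¹) := by
        field_simp
      have h5 : 1 < r * α⁻¹ := by
        rw [← div_eq_mul_inv, lt_div_iff₀ ha0]
        linarith [ha.2]
      rw [hlam₀ α ha0]
      nlinarith
    · filter_upwards [hI] with α ha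
      have ha0 : 0 < α := by linarith [ha.1]
      simpa using hle α 0 ha0 h0m
  · rw [hlam₀ r hr0, hμr, zero_mul]
  · intro α ha β hb hlt
    simp only [Set.mem_Ioi] at ha hb
    have ha0 := hr0.trans ha
    have hb0 := hr0.trans hb
    refine (hle β (μ₀ α) hb0 (hgt α ha0)).trans_lt ?_
    rw [hlam₀ α ha0]
    have h1 := hneg α ha
    have h2 := hs1 (μ₀ α) (hgt α ha0)
    apply mul_lt_mul_of_neg_left _ h1
    gcongr
  · rw [tendsto_order]
    constructor
    · intro a ha
      filter_upwards [eventually_gt_atTop r] with α har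
      have ha0 := hr0.trans har
      have h1 := hgt α ha0
      have h2 := hneg α har
      have h3 := hs1 (μ₀ α) h1
      have h4 : 0 < (α * p)⁻¹ * specSum1 e (μ₀ α) := by positivity
      rw [hlam₀ α ha0]
      nlinarith
    · intro a ha
      obtain ⟨ν, hν1, hν2⟩ := exists_between ha
      have hT : Tendsto (fun α : ℝ => ν * (1 - (α * p)⁻¹ * specSum1 e ν)) atTop
          (nhds (ν * (1 - 0 * specSum1 e ν))) := by
        refine Tendsto.const_mul _ (Tendsto.const_sub _ (Tendsto.mul_const _ ?_))
        exact tendsto_inv_atTop_zero.comp (tendsto_id.atTop_mul_const hp)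
      have := hT.eventually_lt_const (u := a) (by simpa using hν2)
      filter_upwards [this, eventually_gt_atTop 0] with α h1 h2
      exact (hle α ν h2 hν1).trans_lt h1

/-- Dependence of `λ₀` on the aspect ratio `α` (Remark 5.1): `λ₀` is strictly increasing on
`(0, r(A))` with `λ₀(α) → -∞` as `α ↘ 0` and `λ₀(α) → 0` as `α ↗ r(A)`; `λ₀(r(A)) = 0`; and
`λ₀` is strictly decreasing on `(r(A), ∞)` with `λ₀(α) → -λ_min⁺(A)` as `α → ∞`. -/
theorem stmt11 {p : ℕ} (A : Matrix (Fin p) (Fin p) ℂ)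
    (hA : A.PosSemidef) (hA0 : A ≠ 0)
    (μ₀ lam₀ : ℝ → ℝ)
    (hμ₀ : ∀ α : ℝ, 0 < α → -(lminp hA.1) < μ₀ α ∧
      α = (p : ℝ)⁻¹ * specSum2 hA.1.eigenvalues (μ₀ α))
    (hlam₀ : ∀ α : ℝ, 0 < α →
      lam₀ α = μ₀ α * (1 - (α * p)⁻¹ * specSum1 hA.1.eigenvalues (μ₀ α))) :
    StrictMonoOn lam₀ (Set.Ioo 0 ((A.rank : ℝ) / p))
    ∧ Tendsto lam₀ (nhdsWithin 0 (Set.Ioi 0)) atBot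
    ∧ Tendsto lam₀ (nhdsWithin ((A.rank : ℝ) / p) (Set.Iio ((A.rank : ℝ) / p))) (nhds 0)
    ∧ lam₀ ((A.rank : ℝ) / p) = 0
    ∧ StrictAntiOn lam₀ (Set.Ioi ((A.rank : ℝ) / p))
    ∧ Tendsto lam₀ atTop (nhds (-(lminp hA.1))) := by
  have hne : ∃ i, 0 < hA.1.eigenvalues i := by
    by_contra! h
    apply hA0
    rw [← hA.1.eigenvalues_eq_zero_iff]
    funext i
    exact le_antisymm (h i) (hA.eigenvalues_nonneg i)
  have hp : 0 < (p : ℝ) := by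
    obtain ⟨i, _⟩ := hne
    exact_mod_cast i.pos
  have hfin : {x : ℝ | 0 < x ∧ ∃ i, hA.1.eigenvalues i = x}.Finite :=
    (Set.finite_range hA.1.eigenvalues).subset fun x hx => hx.2
  have hnon : {x : ℝ | 0 < x ∧ ∃ i, hA.1.eigenvalues i = x}.Nonempty := by
    obtain ⟨i, hi⟩ := hne
    exact ⟨_, hi, i, rfl⟩
  have hm0 : 0 < lminp hA.1 := (hnon.csInf_mem hfin).1
  have hm : ∀ i, 0 < hA.1.eigenvalues i → lminp hA.1 ≤ hA.1.eigenvalues i :=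
    fun i hi => csInf_le hfin.bddBelow ⟨hi, i, rfl⟩
  have hrank : (A.rank : ℝ) = specSum2 hA.1.eigenvalues 0 := by
    rw [hA.1.rank_eq_card_non_zero_eigs, Fintype.card_subtype, Finset.card_filter]
    unfold specSum2
    push_cast
    refine Finset.sum_congr rfl fun i _ => ?_
    rcases (hA.eigenvalues_nonneg i).eq_or_lt with h | h
    · simp [← h]
    · simp [h, h.ne']
  have hrpos : (0 : ℝ) < A.rank := by
    rw [hrank]
    have h1 := ss1_pos _ _ hm hne 0 (by linarith)
    have h2 : specSum2 hA.1.eigenvalues 0 = specSum1 hA.1.eigenvalues 0 := by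
      unfold specSum1 specSum2
      refine Finset.sum_congr rfl fun i _ => ?_
      split_ifs with h
      · simp [h.ne']
      · rfl
    rw [h2]
    exact h1
  exact ss_main hp _ _ hm0 hm hne _ (by rw [← hrank]; field_simp) (by positivity) μ₀ lam₀ hμ₀ hlam₀
end

section
/- Let A ∈ ℂ^{p×p} be a nonzero positive semidefinite matrix and q ≥ 1 an integer; let μ₀ be the unique solution in (−λ_min⁺(A), ∞) of 1 = (1/q) Σ_{i: λ_i(A)>0} λ_i(A)²/(λ_i(A)+μ₀)², and set λ₀ = μ₀(1 − (1/q) Σ_{i: λ_i(A)>0} λ_i(A)/(λ_i(A)+μ₀)). Then the function F(μ) = μ (1 − (1/q) Σ_{i: λ_i(A)>0} λ_i(A)/(λ_i(A)+μ)) is a strictly increasing bijection from (μ₀, ∞) onto (λ₀, ∞) with derivative F'(μ) = 1 − (1/q) Σ_{i: λ_i(A)>0} λ_i(A)²/(λ_i(A)+μ)² > 0 on (μ₀, ∞). Consequently, for each λ ∈ (λ₀, ∞) there is a unique μ(λ) ∈ (μ₀, ∞) with F(μ(λ)) = λ, the map λ ↦ μ(λ) is strictly increasing, μ(λ) → μ₀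 as λ ↘ λ₀, and μ(λ) → ∞ as λ → ∞. -/
open Matrix Filter
open scoped ComplexOrder

theorem core_aux (F : ℝ → ℝ) (a b : ℝ) (hb : b = F a) (hm : StrictMonoOn F (Set.Ici a))
    (hc : ContinuousOn F (Set.Ici a)) (ht : Tendsto F atTop atTop) :
    StrictMonoOn F (Set.Ioi a) ∧ Set.BijOn F (Set.Ioi a) (Set.Ioi b)
    ∧ (∀ l ∈ Set.Ioi b, ∃! x : ℝ, x ∈ Set.Ioi a ∧ F x = l)
    ∧ ∀ m : ℝ → ℝ, (∀ l ∈ Set.Ioi b, m l ∈ Set.Ioi a ∧ F (m l) = l) →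
        StrictMonoOn m (Set.Ioi b)
        ∧ Tendsto m (nhdsWithin b (Set.Ioi b)) (nhds a)
        ∧ Tendsto m atTop atTop := by
  have hm' : StrictMonoOn F (Set.Ioi a) := hm.mono Set.Ioi_subset_Ici_self
  have hmaps : ∀ x ∈ Set.Ioi a, b < F x := fun x hx => by
    rw [hb]; exact hm Set.self_mem_Ici (Set.Ioi_subset_Ici_self hx) hx
  have hsurj : ∀ l ∈ Set.Ioi b, ∃ x ∈ Set.Ioi a, F x = l := by
    intro l hl
    obtain ⟨B, hB1, hB2⟩ := ((ht.eventually_ge_atTop l).and (eventually_ge_atTop a)).exists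
    obtain ⟨x, hx, hxl⟩ := intermediate_value_Icc hB2 (hc.mono Set.Icc_subset_Ici_self)
      (show l ∈ Set.Icc (F a) (F B) from ⟨by rw [← hb]; exact le_of_lt hl, hB1⟩)
    refine ⟨x, lt_of_le_of_ne hx.1 ?_, hxl⟩
    rintro rfl
    rw [hb, ← hxl] at hl
    exact absurd (Set.mem_Ioi.mp hl) (lt_irrefl _)
  refine ⟨hm', ⟨hmaps, hm'.injOn, hsurj⟩, ?_, ?_⟩
  · intro l hl
    obtain ⟨x, hx, hxl⟩ := hsurj l hl
    exact ⟨x, ⟨hx, hxl⟩, fun y hy => hm'.injOn hy.1 hx (hy.2.trans hxl.symm)⟩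
  · intro m h
    refine ⟨?_, ?_, ?_⟩
    · intro x hx y hy hxy
      rw [← hm'.lt_iff_lt (h x hx).1 (h y hy).1, (h x hx).2, (h y hy).2]
      exact hxy
    · rw [tendsto_order]
      constructor
      · intro c hc
        filter_upwards [self_mem_nhdsWithin] with l hl
        exact lt_trans hc (h l hl).1
      · intro c hc
        filter_upwards [Ioo_mem_nhdsGT (hmaps c hc)] with l hl
        rw [← hm'.lt_iff_lt (h l hl.1).1 hc, (h l hl.1).2]
        exact hl.2
    · rw [tendsto_atTop]
      intro B
      have hB : max B (a + 1) ∈ Set.Ioi a :=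
        lt_of_lt_of_le (lt_add_one a) (le_max_right _ _)
      filter_upwards [eventually_gt_atTop (F (max B (a + 1)))] with l hl
      have hlb : l ∈ Set.Ioi b := lt_trans (hmaps _ hB) hl
      refine le_trans (le_max_left B (a + 1)) (le_of_lt ?_)
      rw [← hm'.lt_iff_lt hB (h l hlb).1, (h l hlb).2]
      exact hl

theorem deriv_aux {p : ℕ} (e : Fin p → ℝ) (c μ : ℝ) (h : ∀ i, 0 < e i → 0 < e i + μ) :
    HasDerivAt (fun x : ℝ => x * (1 - c * specSum1 e x)) (1 - c * specSum2 e μ) μ := by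
  have h1 : ∀ i ∈ (Finset.univ : Finset (Fin p)),
      HasDerivAt (fun x : ℝ => x * if 0 < e i then e i / (e i + x) else 0)
      (if 0 < e i then (e i) ^ 2 / (e i + μ) ^ 2 else 0) μ := by
    intro i _
    by_cases hi : 0 < e i
    · simp only [hi, if_true]
      have hne := (h i hi).ne'
      have := (hasDerivAt_id μ).mul
        ((hasDerivAt_const μ (e i)).div ((hasDerivAt_id μ).const_add (e i)) hne)
      refine this.congr_deriv ?_
      simp only [id, Pi.div_apply]
      field_simp
      ring
    · simp only [hi, if_false, mul_zero]
      exact hasDerivAt_const _ _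
  have h2 := (hasDerivAt_id μ).sub ((HasDerivAt.fun_sum h1).const_mul c)
  refine (h2.congr_of_eventuallyEq (Eventually.of_forall fun x => ?_))
  simp only [specSum1, Pi.sub_apply, id, ← Finset.mul_sum]
  ring

theorem lower_aux {p : ℕ} (e : Fin p → ℝ) (c μ : ℝ) (hc : 0 ≤ c)
    (h : ∀ i, 0 < e i → 0 < e i + μ) :
    μ - c * ∑ i, |e i| ≤ μ * (1 - c * specSum1 e μ) := by
  have h1 : μ * specSum1 e μ ≤ ∑ i, |e i| := by
    rw [specSum1, Finset.mul_sum]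
    refine Finset.sum_le_sum fun i _ => ?_
    by_cases hi : 0 < e i
    · simp only [hi, if_true, abs_of_pos hi]
      rw [mul_div_assoc', div_le_iff₀ (h i hi)]
      nlinarith [sq_nonneg (e i)]
    · simp [hi]
  nlinarith [mul_le_mul_of_nonneg_left h1 hc]

theorem sum2_aux {p : ℕ} (e : Fin p → ℝ) (a μ : ℝ) (h : ∀ i, 0 < e i → 0 < e i + a)
    (hex : ∃ i, 0 < e i) (hμ : a < μ) : specSum2 e μ < specSum2 e a := by
  have key : ∀ i, 0 < e i → (e i) ^ 2 / (e i + μ) ^ 2 < (e i) ^ 2 / (e i + a) ^ 2 := by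
    intro i hi
    have := h i hi
    apply div_lt_div_of_pos_left (by positivity) (by positivity)
    apply pow_lt_pow_left₀ (by linarith) this.le (by norm_num)
  obtain ⟨j, hj⟩ := hex
  refine Finset.sum_lt_sum (fun i _ => ?_) ⟨j, Finset.mem_univ _, ?_⟩
  · by_cases hi : 0 < e i
    · simpa only [hi, if_true] using (key i hi).le
    · simp [hi]
  · simpa only [hj, if_true] using key j hj

/-- The fixed-point map `F(μ) = μ (1 - (1/q) tr[A (A + μ I)⁻¹])` is a strictly increasing
bijection from `(μ₀, ∞)` onto `(λ₀, ∞)` with positive derivative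
`F'(μ) = 1 - (1/q) tr[A² (A + μ I)⁻²]`; for each `λ ∈ (λ₀, ∞)` there is a unique
`μ(λ) ∈ (μ₀, ∞)` with `F(μ(λ)) = λ`, and `λ ↦ μ(λ)` is strictly increasing with
`μ(λ) → μ₀` as `λ ↘ λ₀` and `μ(λ) → ∞` as `λ → ∞`. -/
theorem stmt12 {p : ℕ} (A : Matrix (Fin p) (Fin p) ℂ)
    (hA : A.PosSemidef) (hA0 : A ≠ 0)
    (q : ℕ) (hq : 1 ≤ q) (μ₀ lam₀ : ℝ)
    (hμ₀ : -(lminp hA.1) < μ₀ ∧ 1 = (q : ℝ)⁻¹ * specSum2 hA.1.eigenvalues μ₀)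
    (hlam₀ : lam₀ = μ₀ * (1 - (q : ℝ)⁻¹ * specSum1 hA.1.eigenvalues μ₀)) :
    StrictMonoOn (fun μ : ℝ => μ * (1 - (q : ℝ)⁻¹ * specSum1 hA.1.eigenvalues μ))
      (Set.Ioi μ₀)
    ∧ Set.BijOn (fun μ : ℝ => μ * (1 - (q : ℝ)⁻¹ * specSum1 hA.1.eigenvalues μ))
        (Set.Ioi μ₀) (Set.Ioi lam₀)
    ∧ (∀ μ ∈ Set.Ioi μ₀,
        HasDerivAt (fun x : ℝ => x * (1 - (q : ℝ)⁻¹ * specSum1 hA.1.eigenvalues x))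
          (1 - (q : ℝ)⁻¹ * specSum2 hA.1.eigenvalues μ) μ
        ∧ 0 < 1 - (q : ℝ)⁻¹ * specSum2 hA.1.eigenvalues μ)
    ∧ (∀ lam ∈ Set.Ioi lam₀, ∃! μ : ℝ, μ ∈ Set.Ioi μ₀ ∧
        μ * (1 - (q : ℝ)⁻¹ * specSum1 hA.1.eigenvalues μ) = lam)
    ∧ ∀ m : ℝ → ℝ,
        (∀ lam ∈ Set.Ioi lam₀, m lam ∈ Set.Ioi μ₀ ∧
          m lam * (1 - (q : ℝ)⁻¹ * specSum1 hA.1.eigenvalues (m lam)) = lam) →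
        StrictMonoOn m (Set.Ioi lam₀)
        ∧ Tendsto m (nhdsWithin lam₀ (Set.Ioi lam₀)) (nhds μ₀)
        ∧ Tendsto m atTop atTop := by
  have hcpos : (0 : ℝ) < (q : ℝ)⁻¹ := by
    have : (0 : ℝ) < q := by exact_mod_cast hq
    positivity
  obtain ⟨hlo, heq⟩ := hμ₀
  have hpos : ∀ i, 0 < hA.1.eigenvalues i → 0 < hA.1.eigenvalues i + μ₀ := by
    intro i hi
    have : lminp hA.1 ≤ hA.1.eigenvalues i :=
      csInf_le ⟨0, fun x hx => hx.1.le⟩ ⟨hi, i, rfl⟩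
    linarith
  generalize hA.1.eigenvalues = e at *
  generalize (q : ℝ)⁻¹ = c at *
  have hex : ∃ i, 0 < e i := by
    by_contra hcon
    push Not at hcon
    have : specSum2 e μ₀ = 0 :=
      Finset.sum_eq_zero fun i _ => if_neg (not_lt.mpr (hcon i))
    rw [this] at heq
    norm_num at heq
  have hpos' : ∀ μ, μ₀ ≤ μ → ∀ i, 0 < e i → 0 < e i + μ := fun μ hμ i hi => by
    linarith [hpos i hi]
  have hd : ∀ μ, μ₀ ≤ μ → HasDerivAt (fun x : ℝ => x * (1 - c * specSum1 e x))
      (1 - c * specSum2 e μ) μ := fun μ hμ => deriv_aux e c μ (hpos' μ hμ)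
  have hdp : ∀ μ, μ₀ < μ → 0 < 1 - c * specSum2 e μ := fun μ hμ => by
    have := mul_lt_mul_of_pos_left (sum2_aux e μ₀ μ hpos hex hμ) hcpos
    linarith
  have hcont : ContinuousOn (fun x : ℝ => x * (1 - c * specSum1 e x)) (Set.Ici μ₀) :=
    fun x hx => (hd x hx).continuousAt.continuousWithinAt
  have hmono : StrictMonoOn (fun x : ℝ => x * (1 - c * specSum1 e x)) (Set.Ici μ₀) := by
    refine strictMonoOn_of_deriv_pos (convex_Ici _) hcont fun x hx => ?_
    rw [interior_Ici] at hx
    rw [(hd x (le_of_lt hx)).deriv]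
    exact hdp x hx
  have ht : Tendsto (fun x : ℝ => x * (1 - c * specSum1 e x)) atTop atTop := by
    refine tendsto_atTop_mono' atTop ?_
      (tendsto_atTop_add_const_right atTop (-(c * ∑ i, |e i|)) tendsto_id)
    filter_upwards [eventually_ge_atTop μ₀] with x hx
    simpa [sub_eq_add_neg] using lower_aux e c x hcpos.le (hpos' x hx)
  obtain ⟨c1, c2, c3, c4⟩ := core_aux _ μ₀ lam₀ hlam₀ hmono hcont ht
  exact ⟨c1, c2, fun μ hμ => ⟨hd μ (le_of_lt hμ), hdp μ hμ⟩, c3, c4⟩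
end

section
/- Let A ∈ ℂ^{p×p} be a nonzero positive semidefinite matrix with relative rank r(A) = rank(A)/p, let α > 0, let μ₀ be the unique solution in (−λ_min⁺(A), ∞) of α = (1/p) Σ_{i: λ_i(A)>0} λ_i(A)²/(λ_i(A)+μ₀)², and for λ > λ₀ let μ be the unique solution in (μ₀, ∞) of λ = μ(1 − (1/(αp)) Σ_{i: λ_i(A)>0} λ_i(A)/(λ_i(A)+μ)). Then: if λ ≥ 0 then μ ≥ 0 (for any α > 0); if λ < 0 and α ≤ r(A) then μ ≥ 0; and if λ < 0 and α > r(A) then μ < 0, i.e., sign(μ) = sign(λ). -/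
open Matrix Filter
open scoped ComplexOrder

/-- Joint signs of `λ` and `μ` (Remark 5.4): if `λ ≥ 0` then `μ ≥ 0`; if `λ < 0` and
`α ≤ r(A)` then `μ ≥ 0`; and if `λ < 0` and `α > r(A)` then `μ < 0`. -/
theorem stmt14 {p : ℕ} (A : Matrix (Fin p) (Fin p) ℂ)
    (hA : A.PosSemidef) (hA0 : A ≠ 0)
    (α : ℝ) (hα : 0 < α) (μ₀ lam₀ lam μ : ℝ)
    (hμ₀ : -(lminp hA.1) < μ₀ ∧ α = (p : ℝ)⁻¹ * specSum2 hA.1.eigenvalues μ₀)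
    (hlam₀ : lam₀ = μ₀ * (1 - (α * p)⁻¹ * specSum1 hA.1.eigenvalues μ₀))
    (hlam : lam₀ < lam)
    (hμ : μ₀ < μ ∧ lam = μ * (1 - (α * p)⁻¹ * specSum1 hA.1.eigenvalues μ)) :
    (0 ≤ lam → 0 ≤ μ)
    ∧ (lam < 0 → α ≤ (A.rank : ℝ) / p → 0 ≤ μ)
    ∧ (lam < 0 → (A.rank : ℝ) / p < α → μ < 0) := by
  have hnn := hA.eigenvalues_nonneg
  have hrank : (A.rank : ℝ) = ∑ i, if 0 < hA.1.eigenvalues i then (1 : ℝ) else 0 := by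
    rw [hA.1.rank_eq_card_non_zero_eigs, Fintype.card_subtype, Finset.sum_boole]
    congr 2
    ext i
    simp only [Finset.mem_filter, Finset.mem_univ, true_and]
    exact ⟨fun h => lt_of_le_of_ne (hnn i) (Ne.symm h), fun h => h.ne'⟩
  have hex : ∃ i, 0 < hA.1.eigenvalues i := by
    by_contra! h
    apply hA0
    apply hA.1.eigenvalues_eq_zero_iff.mp
    ext i
    exact le_antisymm (h i) (hnn i)
  have hlm : ∀ i, 0 < hA.1.eigenvalues i → 0 < hA.1.eigenvalues i + μ₀ := by
    intro i hi
    have : lminp hA.1 ≤ hA.1.eigenvalues i :=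
      csInf_le ⟨0, fun x hx => hx.1.le⟩ ⟨hi, i, rfl⟩
    linarith [hμ₀.1]
  generalize hA.1.eigenvalues = e at *
  obtain ⟨i₀, hi₀⟩ := hex
  have hp : (0 : ℝ) < p := by
    have := i₀.pos
    exact_mod_cast this
  have hD : α * p = specSum2 e μ₀ := by
    rw [hμ₀.2]; field_simp
  have hDpos : 0 < α * p := mul_pos hα hp
  -- the key comparison when `μ < 0`
  have key : μ < 0 → (A.rank : ℝ) < α * p ∧ specSum1 e μ < α * p := by
    intro hneg
    have hterm : ∀ i, 0 < e i → 1 < e i ^ 2 / (e i + μ₀) ^ 2 ∧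
        e i / (e i + μ) < e i ^ 2 / (e i + μ₀) ^ 2 := by
      intro i hi
      have h0 := hlm i hi
      have h1 : e i + μ₀ < e i + μ := by linarith [hμ.1]
      have h2 : e i / (e i + μ) < e i / (e i + μ₀) := div_lt_div_of_pos_left hi h0 h1
      have h3 : 1 < e i / (e i + μ₀) := by
        rw [lt_div_iff₀ h0]; linarith [hμ.1]
      rw [← div_pow]
      constructor <;> nlinarith
    rw [hD, hrank]
    unfold specSum1 specSum2
    constructor
    · refine Finset.sum_lt_sum (fun i _ => ?_) ⟨i₀, Finset.mem_univ _, ?_⟩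
      · split_ifs with h
        · exact (hterm i h).1.le
        · exact le_rfl
      · simp only [if_pos hi₀]; exact (hterm i₀ hi₀).1
    · refine Finset.sum_lt_sum (fun i _ => ?_) ⟨i₀, Finset.mem_univ _, ?_⟩
      · split_ifs with h
        · exact (hterm i h).2.le
        · exact le_rfl
      · simp only [if_pos hi₀]; exact (hterm i₀ hi₀).2
  refine ⟨fun hl => ?_, fun _ hr => ?_, fun hl hr => ?_⟩
  · by_contra! hneg
    have h := (key hneg).2
    have h1 : (α * p)⁻¹ * specSum1 e μ < 1 := by
      rw [inv_mul_lt_iff₀ hDpos]; linarith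
    have := mul_neg_of_neg_of_pos hneg (sub_pos.mpr h1)
    linarith [hμ.2]
  · by_contra! hneg
    have h := (key hneg).1
    rw [le_div_iff₀ hp] at hr
    linarith
  · by_contra! hpos
    rw [div_lt_iff₀ hp] at hr
    have hS : specSum1 e μ ≤ A.rank := by
      rw [hrank]
      unfold specSum1
      refine Finset.sum_le_sum (fun i _ => ?_)
      split_ifs with h
      · rw [div_le_one (by linarith)]; linarith
      · exact le_rfl
    have h1 : (α * p)⁻¹ * specSum1 e μ < 1 := by
      rw [inv_mul_lt_iff₀ hDpos]; linarith
    have := mul_nonneg hpos (sub_pos.mpr h1).le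
    linarith [hμ.2]
end

section
/- Let A ∈ ℂ^{p×p} be a nonzero positive semidefinite matrix, let q ≥ 1, set α = q/p, let μ₀ be the unique solution in (−λ_min⁺(A), ∞) of 1 = (1/q) Σ_{i: λ_i(A)>0} λ_i(A)²/(λ_i(A)+μ₀)², let λ₀ = μ₀(1 − (1/q) Σ_{i: λ_i(A)>0} λ_i(A)/(λ_i(A)+μ₀)), and for λ ∈ (λ₀, ∞) let μ(λ) be the unique solution in (μ₀, ∞) of λ = μ(1 − (1/q) Σ_{i: λ_i(A)>0} λ_i(A)/(λ_i(A)+μ)). Then: (a) λ ↦ μ(λ) is concave on (λ₀, ∞); (b) μ(λ) ≤ λ + (1/q) tr[A] for all λ ∈ (λ₀, ∞); (c) if α ≤ r(A) then μ(λ) ≥ λ for all λ ∈ (λ₀, ∞), and otherwise μ(λ) ≥ λ for all λ ≥ 0; and (d) |μ(λ) − (λ + (1/q) tr[A])| → 0 as λ → ∞. -/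
open Matrix Filter
open scoped ComplexOrder

section Core
variable {ι : Type*} (S : Finset ι) (e : ι → ℝ)

theorem core_form (c x : ℝ) (h : ∀ i ∈ S, 0 < e i + x) :
    x * (1 - c * ∑ i ∈ S, e i / (e i + x))
      = x - c * ∑ i ∈ S, e i + c * ∑ i ∈ S, e i ^ 2 / (e i + x) := by
  have : x * ∑ i ∈ S, e i / (e i + x) = ∑ i ∈ S, e i - ∑ i ∈ S, e i ^ 2 / (e i + x) := by
    rw [Finset.mul_sum, ← Finset.sum_sub_distrib]
    refine Finset.sum_congr rfl fun i hi => ?_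
    have := (h i hi).ne'
    field_simp
    ring
  linear_combination (-c) * this

theorem core_mono (c m x y : ℝ) (hc : 0 < c) (hS : S.Nonempty) (he : ∀ i ∈ S, 0 < e i)
    (h : ∀ i ∈ S, 0 < e i + m) (h1 : 1 = c * ∑ i ∈ S, e i ^ 2 / (e i + m) ^ 2)
    (hx : m ≤ x) (hxy : x < y) :
    x + c * ∑ i ∈ S, e i ^ 2 / (e i + x) < y + c * ∑ i ∈ S, e i ^ 2 / (e i + y) := by
  have key : ∑ i ∈ S, e i ^ 2 / (e i + x) - ∑ i ∈ S, e i ^ 2 / (e i + y)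
      < (y - x) * ∑ i ∈ S, e i ^ 2 / (e i + m) ^ 2 := by
    rw [Finset.mul_sum, ← Finset.sum_sub_distrib]
    refine Finset.sum_lt_sum_of_nonempty hS fun i hi => ?_
    have hm := h i hi
    have hei := he i hi
    have hx' : 0 < e i + x := by linarith
    have hy' : 0 < e i + y := by linarith
    have h2 : e i ^ 2 / (e i + x) - e i ^ 2 / (e i + y)
        = (y - x) * (e i ^ 2 / ((e i + x) * (e i + y))) := by
      field_simp
      ring
    rw [h2]
    refine mul_lt_mul_of_pos_left ?_ (by linarith)
    refine div_lt_div_of_pos_left (by positivity) (by positivity) ?_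
    nlinarith
  have := mul_lt_mul_of_pos_left key hc
  have h3 : c * ((y - x) * ∑ i ∈ S, e i ^ 2 / (e i + m) ^ 2) = y - x := by
    linear_combination (-(y - x)) * h1
  rw [h3] at this
  linarith

theorem core_convex (x y a b : ℝ) (hx : ∀ i ∈ S, 0 < e i + x) (hy : ∀ i ∈ S, 0 < e i + y)
    (ha : 0 ≤ a) (hb : 0 ≤ b) (hab : a + b = 1) :
    ∑ i ∈ S, e i ^ 2 / (e i + (a * x + b * y))
      ≤ a * ∑ i ∈ S, e i ^ 2 / (e i + x) + b * ∑ i ∈ S, e i ^ 2 / (e i + y) := by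
  rw [Finset.mul_sum, Finset.mul_sum, ← Finset.sum_add_distrib]
  refine Finset.sum_le_sum fun i hi => ?_
  have h1 := hx i hi
  have h2 := hy i hi
  have hc := (convexOn_zpow (𝕜 := ℝ) (-1)).2 (Set.mem_Ioi.2 h1) (Set.mem_Ioi.2 h2) ha hb hab
  simp only [smul_eq_mul, _root_.zpow_neg_one] at hc
  have h3 : a * (e i + x) + b * (e i + y) = e i + (a * x + b * y) := by
    linear_combination (e i) * hab
  rw [h3] at hc
  have := mul_le_mul_of_nonneg_left hc (sq_nonneg (e i))
  simp only [div_eq_mul_inv]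
  linarith

theorem core_main (q : ℕ) (hq : 1 ≤ q) (m l0 : ℝ) (he : ∀ i ∈ S, 0 < e i)
    (h : ∀ i ∈ S, 0 < e i + m)
    (h1 : 1 = (q : ℝ)⁻¹ * ∑ i ∈ S, e i ^ 2 / (e i + m) ^ 2)
    (hl0 : l0 = m * (1 - (q : ℝ)⁻¹ * ∑ i ∈ S, e i / (e i + m)))
    (f : ℝ → ℝ)
    (hf : ∀ l ∈ Set.Ioi l0, m < f l ∧
      l = f l * (1 - (q : ℝ)⁻¹ * ∑ i ∈ S, e i / (e i + f l))) :
    ConcaveOn ℝ (Set.Ioi l0) f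
    ∧ (∀ l ∈ Set.Ioi l0, f l ≤ l + (q : ℝ)⁻¹ * ∑ i ∈ S, e i)
    ∧ (q ≤ S.card → ∀ l ∈ Set.Ioi l0, l ≤ f l)
    ∧ (S.card < q → ∀ l : ℝ, 0 ≤ l → l ≤ f l)
    ∧ Tendsto (fun l : ℝ => f l - (l + (q : ℝ)⁻¹ * ∑ i ∈ S, e i)) atTop (nhds 0) := by
  have hq0 : (0 : ℝ) < q := by exact_mod_cast hq
  have hc : (0 : ℝ) < (q : ℝ)⁻¹ := inv_pos.2 hq0
  have hS : S.Nonempty := by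
    rcases S.eq_empty_or_nonempty with h0 | h0
    · simp [h0] at h1
    · exact h0
  have hpos : ∀ x, m ≤ x → ∀ i ∈ S, 0 < e i + x := fun x hx i hi => by
    linarith [h i hi]
  set c := (q : ℝ)⁻¹ with hcdef
  have hcq : c * q = 1 := inv_mul_cancel₀ hq0.ne'
  have hform : ∀ l ∈ Set.Ioi l0, l = f l - c * ∑ i ∈ S, e i
      + c * ∑ i ∈ S, e i ^ 2 / (e i + f l) := fun l hl => by
    rw [← core_form S e c (f l) (hpos _ (hf l hl).1.le)]
    exact (hf l hl).2
  have hmono := fun x y => core_mono S e c m x y hc hS he h h1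
  have hRnn : ∀ x, m ≤ x → 0 ≤ ∑ i ∈ S, e i ^ 2 / (e i + x) := fun x hx =>
    Finset.sum_nonneg fun i hi => div_nonneg (sq_nonneg _) (hpos x hx i hi).le
  have hS1 : ∀ x, m ≤ x → 0 ≤ ∑ i ∈ S, e i / (e i + x) := fun x hx =>
    Finset.sum_nonneg fun i hi => div_nonneg (he i hi).le (hpos x hx i hi).le
  have hle : ∀ l ∈ Set.Ioi l0, 0 ≤ f l → l ≤ f l := fun l hl h0 => by
    have h2 := (hf l hl).2
    have h3 := mul_nonneg h0 (mul_nonneg hc.le (hS1 _ (hf l hl).1.le))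
    linarith
  have hsum : ∑ i ∈ S, e i ^ 2 / (e i + m) ^ 2 = q := by
    have : c * (∑ i ∈ S, e i ^ 2 / (e i + m) ^ 2 - q) = 0 := by linarith
    rcases mul_eq_zero.1 this with h0 | h0
    · exact absurd h0 hc.ne'
    · linarith
  have hc1 : q ≤ S.card → ∀ l ∈ Set.Ioi l0, l ≤ f l := fun hcard l hl => by
    refine hle l hl (le_trans ?_ (hf l hl).1.le)
    by_contra! hm
    have h2 : ∑ i ∈ S, (1 : ℝ) < ∑ i ∈ S, e i ^ 2 / (e i + m) ^ 2 := by
      refine Finset.sum_lt_sum_of_nonempty hS fun i hi => ?_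
      have h3 := h i hi
      rw [one_lt_div (by positivity)]
      nlinarith [he i hi]
    rw [hsum] at h2
    simp only [Finset.sum_const, nsmul_eq_mul, mul_one] at h2
    have : (q : ℝ) ≤ S.card := by exact_mod_cast hcard
    linarith
  have hc2' : S.card < q → l0 < 0 ∧ ∀ l : ℝ, 0 ≤ l → l ≤ f l := fun hcard => by
    have hm : m < 0 := by
      by_contra! hm
      have h2 : ∑ i ∈ S, e i ^ 2 / (e i + m) ^ 2 ≤ ∑ i ∈ S, (1 : ℝ) := by
        refine Finset.sum_le_sum fun i hi => ?_
        have h3 := h i hi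
        rw [div_le_one (by positivity)]
        nlinarith [he i hi]
      rw [hsum] at h2
      simp only [Finset.sum_const, nsmul_eq_mul, mul_one] at h2
      have : (S.card : ℝ) < q := by exact_mod_cast hcard
      linarith
    have h00 : ∑ i ∈ S, e i ^ 2 / (e i + 0) = ∑ i ∈ S, e i := by
      refine Finset.sum_congr rfl fun i hi => ?_
      rw [add_zero, sq, mul_div_assoc, div_self (he i hi).ne', mul_one]
    have hl0neg : l0 < 0 := by
      have h4 := hmono m 0 le_rfl hm
      rw [h00] at h4
      rw [core_form S e c m h] at hl0
      linarith
    refine ⟨hl0neg, fun l hl => ?_⟩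
    have hl' : l ∈ Set.Ioi l0 := lt_of_lt_of_le hl0neg hl
    refine hle l hl' ?_
    by_contra! hneg
    have h4 := hmono (f l) 0 (hf l hl').1.le hneg
    rw [h00] at h4
    have := hform l hl'
    linarith
  have hc2 : S.card < q → ∀ l : ℝ, 0 ≤ l → l ≤ f l := fun hcard => (hc2' hcard).2
  refine ⟨⟨convex_Ioi l0, ?_⟩, ?_, hc1, hc2, ?_⟩
  · intro x hx y hy a b ha hb hab
    have hz := convex_Ioi l0 hx hy ha hb hab
    simp only [smul_eq_mul] at hz ⊢
    by_contra! hlt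
    have h5 := hmono _ _ (hf _ hz).1.le hlt
    have h6 := mul_le_mul_of_nonneg_left (core_convex S e (f x) (f y) a b
      (hpos _ (hf x hx).1.le) (hpos _ (hf y hy).1.le) ha hb hab) hc.le
    have h7 := hform _ hz
    have h8 := hform x hx
    have h9 := hform y hy
    have h10 : a * x + b * y = a * f x + b * f y - c * ∑ i ∈ S, e i
        + c * (a * ∑ i ∈ S, e i ^ 2 / (e i + f x) + b * ∑ i ∈ S, e i ^ 2 / (e i + f y)) := by
      linear_combination a * h8 + b * h9 - c * (∑ i ∈ S, e i) * hab
    linarith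
  · intro l hl
    have h2 := hform l hl
    have h3 := mul_nonneg hc.le (hRnn _ (hf l hl).1.le)
    linarith
  · have hev : ∀ᶠ l in atTop, l ≤ f l := by
      rcases le_or_gt q S.card with h2 | h2
      · filter_upwards [eventually_gt_atTop l0] with l hl using hc1 h2 l hl
      · filter_upwards [eventually_ge_atTop 0] with l hl using hc2 h2 l hl
    have hft : Tendsto f atTop atTop := tendsto_atTop_mono' _ hev tendsto_id
    have hlim : Tendsto (fun l => -(c * ∑ i ∈ S, e i ^ 2 / (e i + f l))) atTop (nhds 0) := by
      have : Tendsto (fun l => ∑ i ∈ S, e i ^ 2 / (e i + f l)) atTop (nhds (∑ i ∈ S, (0 : ℝ))) :=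
        tendsto_finsetSum _ fun i _ =>
          (tendsto_atTop_add_const_left _ (e i) hft).const_div_atTop _
      simpa using (this.const_mul c).neg
    refine hlim.congr' ?_
    filter_upwards [eventually_gt_atTop l0] with l hl
    have := hform l hl
    linarith

end Core

/-- Concavity, bounds, and asymptotic behaviour of `μ` in `λ` (Proposition 5.5): `λ ↦ μ(λ)`
is concave on `(λ₀, ∞)`; `μ(λ) ≤ λ + (1/q) tr[A]`; if `α ≤ r(A)` then `μ(λ) ≥ λ` on
`(λ₀, ∞)` and otherwise `μ(λ) ≥ λ` for all `λ ≥ 0`; and `μ(λ) - (λ + (1/q) tr[A]) → 0`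
as `λ → ∞`. -/
theorem stmt15 {p : ℕ} (A : Matrix (Fin p) (Fin p) ℂ)
    (hA : A.PosSemidef) (hA0 : A ≠ 0)
    (q : ℕ) (hq : 1 ≤ q) (μ₀ lam₀ : ℝ)
    (hμ₀ : -(lminp hA.1) < μ₀ ∧ 1 = (q : ℝ)⁻¹ * specSum2 hA.1.eigenvalues μ₀)
    (hlam₀ : lam₀ = μ₀ * (1 - (q : ℝ)⁻¹ * specSum1 hA.1.eigenvalues μ₀))
    (μf : ℝ → ℝ)
    (hμf : ∀ lam ∈ Set.Ioi lam₀, μ₀ < μf lam ∧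
      lam = μf lam * (1 - (q : ℝ)⁻¹ * specSum1 hA.1.eigenvalues (μf lam))) :
    ConcaveOn ℝ (Set.Ioi lam₀) μf
    ∧ (∀ lam ∈ Set.Ioi lam₀, μf lam ≤ lam + (q : ℝ)⁻¹ * (Matrix.trace A).re)
    ∧ ((q : ℝ) / p ≤ (A.rank : ℝ) / p → ∀ lam ∈ Set.Ioi lam₀, lam ≤ μf lam)
    ∧ ((A.rank : ℝ) / p < (q : ℝ) / p → ∀ lam : ℝ, 0 ≤ lam → lam ≤ μf lam)
    ∧ Tendsto (fun lam : ℝ => μf lam - (lam + (q : ℝ)⁻¹ * (Matrix.trace A).re))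
        atTop (nhds 0) := by
  have hnn := hA.eigenvalues_nonneg
  set S : Finset (Fin p) := Finset.univ.filter fun i => 0 < hA.1.eigenvalues i with hSdef
  have e1 : ∀ x, specSum1 hA.1.eigenvalues x
      = ∑ i ∈ S, hA.1.eigenvalues i / (hA.1.eigenvalues i + x) := fun x => by
    rw [hSdef, Finset.sum_filter]
    rfl
  have e2 : ∀ x, specSum2 hA.1.eigenvalues x
      = ∑ i ∈ S, hA.1.eigenvalues i ^ 2 / (hA.1.eigenvalues i + x) ^ 2 := fun x => by
    rw [hSdef, Finset.sum_filter]
    rfl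
  have htr : (Matrix.trace A).re = ∑ i ∈ S, hA.1.eigenvalues i := by
    rw [hA.1.trace_eq_sum_eigenvalues, hSdef, Finset.sum_filter, Complex.re_sum]
    refine Finset.sum_congr rfl fun i _ => ?_
    split_ifs with h
    · simp
    · have := le_antisymm (not_lt.1 h) (hnn i)
      simp [this]
  have hrank : A.rank = S.card := by
    rw [hA.1.rank_eq_card_non_zero_eigs, Fintype.card_subtype, hSdef]
    congr 1
    ext i
    simp only [Finset.mem_filter, Finset.mem_univ, true_and]
    exact ⟨fun h => lt_of_le_of_ne (hnn i) (Ne.symm h), fun h => h.ne'⟩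
  have he : ∀ i ∈ S, 0 < hA.1.eigenvalues i := fun i hi => (Finset.mem_filter.1 hi).2
  have hm : ∀ i ∈ S, 0 < hA.1.eigenvalues i + μ₀ := fun i hi => by
    have : lminp hA.1 ≤ hA.1.eigenvalues i :=
      csInf_le ⟨0, fun x hx => hx.1.le⟩ ⟨he i hi, i, rfl⟩
    linarith [hμ₀.1]
  have hp : (0 : ℝ) < p := by
    rcases Nat.eq_zero_or_pos p with h | h
    · subst h
      exact absurd (Subsingleton.elim A 0) hA0
    · exact_mod_cast h
  simp only [e1, e2] at hμ₀ hlam₀ hμf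
  obtain ⟨c1, c2, c3, c4, c5⟩ := core_main S hA.1.eigenvalues q hq μ₀ lam₀ he hm hμ₀.2 hlam₀ μf hμf
  rw [htr, hrank]
  refine ⟨c1, c2, fun h => c3 ?_, fun h => c4 ?_, c5⟩
  · rw [div_le_div_iff_of_pos_right hp] at h
    exact_mod_cast h
  · rw [div_lt_div_iff_of_pos_right hp] at h
    exact_mod_cast h
end

section
/- Let A, Ψ ∈ ℂ^{p×p} be positive semidefinite matrices with A nonzero, let q ≥ 1, let μ₀ be the unique solution in (−λ_min⁺(A), ∞) of 1 = (1/q) Σ_{i: λ_i(A)>0} λ_i(A)²/(λ_i(A)+μ₀)², let μ ∈ (μ₀, ∞) with μ ≠ 0, and set λ = μ(1 − (1/q) tr[A(A+μ I_p)⁻¹]). Define μ' = (1/q) tr[μ³ (A + μ I_p)⁻¹ Ψ (A + μ I_p)⁻¹] / (λ + (1/q) tr[μ² A (A + μ I_p)⁻²]). Then the denominator equals μ(1 − (1/q) tr[A²(A+μ I_p)⁻²]) ≠ 0, and μ' admits the factorization μ' = (1/q) tr[μ² (A + μ I_p)⁻¹ Ψ (A + μ I_p)⁻¹] · (1 − (1/q)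 tr[A² (A + μ I_p)⁻²])⁻¹; in particular μ' ≥ 0. -/
open Matrix Filter
open scoped ComplexOrder

lemma spec_aux {p : ℕ} (A : Matrix (Fin p) (Fin p) ℂ) (hA : A.PosSemidef) (μ : ℝ)
    (hne : ∀ i, hA.1.eigenvalues i + μ ≠ 0) :
    IsUnit (A + (μ : ℂ) • (1 : Matrix (Fin p) (Fin p) ℂ)) ∧
    (Matrix.trace (A ^ 2 * ((A + (μ : ℂ) • 1) ^ 2)⁻¹)).re = specSum2 hA.1.eigenvalues μ := by
  obtain ⟨U, V, hUV, hVU, hAe⟩ : ∃ U V : Matrix (Fin p) (Fin p) ℂ, U * V = 1 ∧ V * U = 1 ∧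
      A = U * diagonal (fun i => (hA.1.eigenvalues i : ℂ)) * V := by
    refine ⟨hA.1.eigenvectorUnitary, star (hA.1.eigenvectorUnitary : Matrix (Fin p) (Fin p) ℂ),
      by simp, by simp, ?_⟩
    exact hA.1.spectral_theorem
  set e := hA.1.eigenvalues with he
  have hmul : ∀ a b : Fin p → ℂ, (U * diagonal a * V) * (U * diagonal b * V)
      = U * diagonal (fun i => a i * b i) * V := by
    intro a b
    calc _ = U * diagonal a * (V * U) * diagonal b * V := by simp only [Matrix.mul_assoc]
      _ = _ := by rw [hVU, Matrix.mul_one, Matrix.mul_assoc U, diagonal_mul_diagonal]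
  have hB : A + (μ : ℂ) • (1 : Matrix (Fin p) (Fin p) ℂ)
      = U * diagonal (fun i => (e i + μ : ℂ)) * V := by
    have : (diagonal (fun i => (e i + μ : ℂ)) : Matrix (Fin p) (Fin p) ℂ)
        = diagonal (fun i => (e i : ℂ)) + (μ : ℂ) • 1 := by
      rw [smul_one_eq_diagonal, diagonal_add]
    rw [this, Matrix.mul_add, Matrix.add_mul, ← hAe]
    simp [hUV]
  have hne' : ∀ i, (e i + μ : ℂ) ≠ 0 := fun i => by exact_mod_cast hne i
  have hinv : (A + (μ : ℂ) • (1 : Matrix (Fin p) (Fin p) ℂ))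
      * (U * diagonal (fun i => (e i + μ : ℂ)⁻¹) * V) = 1 := by
    rw [hB, hmul]
    simp [hne', hUV]
  refine ⟨IsUnit.of_mul_eq_one _ hinv, ?_⟩
  have h2 : ((A + (μ : ℂ) • (1 : Matrix (Fin p) (Fin p) ℂ)) ^ 2)⁻¹
      = U * diagonal (fun i => ((e i + μ : ℂ)⁻¹ * (e i + μ : ℂ)⁻¹)) * V := by
    apply Matrix.inv_eq_right_inv
    rw [pow_two, hB, hmul, hmul]
    have : (fun i => (e i + μ : ℂ) * (e i + μ : ℂ) * ((e i + μ : ℂ)⁻¹ * (e i + μ : ℂ)⁻¹))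
        = fun _ => 1 := by
      funext i
      have := hne' i
      field_simp
    rw [this]
    simp [hUV]
  have h3 : A ^ 2 = U * diagonal (fun i => (e i * e i : ℂ)) * V := by
    rw [pow_two, ← hmul, ← hAe]
  rw [h2, h3, hmul, Matrix.trace_mul_cycle, hVU, Matrix.one_mul, trace_diagonal, Complex.re_sum]
  unfold specSum2
  refine Finset.sum_congr rfl fun i _ => ?_
  have h0 : 0 ≤ e i := hA.eigenvalues_nonneg i
  have : ((e i * e i : ℂ) * ((e i + μ : ℂ)⁻¹ * (e i + μ : ℂ)⁻¹))
      = ((e i ^ 2 / (e i + μ) ^ 2 : ℝ) : ℂ) := by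
    push_cast
    rw [div_eq_mul_inv, pow_two, pow_two, mul_inv]
  rw [this, Complex.ofReal_re]
  split_ifs with h
  · rfl
  · have : e i = 0 := le_antisymm (not_lt.mp h) h0
    simp [this]

/-- Alternative form of the inflation factor `μ'` (Remark 5.6): the denominator of `μ'`
equals `μ (1 - (1/q) tr[A² (A + μ I)⁻²]) ≠ 0`, and
`μ' = (1/q) tr[μ² (A + μ I)⁻¹ Ψ (A + μ I)⁻¹] ⬝ (1 - (1/q) tr[A² (A + μ I)⁻²])⁻¹ ≥ 0`. -/
theorem stmt16 {p : ℕ} (A Psi : Matrix (Fin p) (Fin p) ℂ)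
    (hA : A.PosSemidef) (hPsi : Psi.PosSemidef) (hA0 : A ≠ 0)
    (q : ℕ) (hq : 1 ≤ q) (μ₀ μ : ℝ)
    (hμ₀ : -(lminp hA.1) < μ₀ ∧ 1 = (q : ℝ)⁻¹ * specSum2 hA.1.eigenvalues μ₀)
    (hμ : μ₀ < μ) (hμne : μ ≠ 0)
    (lam : ℝ)
    (hlam : lam = μ * (1 - (q : ℝ)⁻¹ * (Matrix.trace (A * (A + (μ : ℂ) • 1)⁻¹)).re))
    (μ' : ℝ)
    (hμ' : μ' = ((q : ℝ)⁻¹ * (μ ^ 3 *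
          (Matrix.trace ((A + (μ : ℂ) • 1)⁻¹ * Psi * (A + (μ : ℂ) • 1)⁻¹)).re))
        / (lam + (q : ℝ)⁻¹ * (μ ^ 2 *
          (Matrix.trace (A * ((A + (μ : ℂ) • 1) ^ 2)⁻¹)).re))) :
    (lam + (q : ℝ)⁻¹ * (μ ^ 2 * (Matrix.trace (A * ((A + (μ : ℂ) • 1) ^ 2)⁻¹)).re)
        = μ * (1 - (q : ℝ)⁻¹ * (Matrix.trace (A ^ 2 * ((A + (μ : ℂ) • 1) ^ 2)⁻¹)).re))
    ∧ (lam + (q : ℝ)⁻¹ * (μ ^ 2 * (Matrix.trace (A * ((A + (μ : ℂ) • 1) ^ 2)⁻¹)).re) ≠ 0)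
    ∧ μ' = ((q : ℝ)⁻¹ * (μ ^ 2 *
          (Matrix.trace ((A + (μ : ℂ) • 1)⁻¹ * Psi * (A + (μ : ℂ) • 1)⁻¹)).re))
        * (1 - (q : ℝ)⁻¹ * (Matrix.trace (A ^ 2 * ((A + (μ : ℂ) • 1) ^ 2)⁻¹)).re)⁻¹
    ∧ 0 ≤ μ' := by
  have hlm : ∀ i, 0 < hA.1.eigenvalues i → lminp hA.1 ≤ hA.1.eigenvalues i := fun i hi =>
    csInf_le ⟨0, fun x hx => hx.1.le⟩ ⟨hi, i, rfl⟩
  have hne : ∀ i, hA.1.eigenvalues i + μ ≠ 0 := by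
    intro i
    rcases (hA.eigenvalues_nonneg i).lt_or_eq with h | h
    · have := hlm i h
      have := hμ₀.1
      intro h'
      linarith
    · rw [← h]
      simpa using hμne
  obtain ⟨hU, hT⟩ := spec_aux A hA μ hne
  have hqpos : (0 : ℝ) < q := by exact_mod_cast hq
  have hterm : ∀ i, 0 < hA.1.eigenvalues i →
      (hA.1.eigenvalues i) ^ 2 / (hA.1.eigenvalues i + μ) ^ 2
        < (hA.1.eigenvalues i) ^ 2 / (hA.1.eigenvalues i + μ₀) ^ 2 := by
    intro i hi
    have h1 := hlm i hi
    have h2 := hμ₀.1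
    have h3 : 0 < hA.1.eigenvalues i + μ₀ := by linarith
    apply div_lt_div_of_pos_left (by positivity) (by positivity)
    apply pow_lt_pow_left₀ _ h3.le (by norm_num)
    linarith
  have hex : ∃ i, 0 < hA.1.eigenvalues i := by
    by_contra! hcon
    have h1 := hμ₀.2
    have : specSum2 hA.1.eigenvalues μ₀ = 0 := by
      unfold specSum2
      exact Finset.sum_eq_zero fun i _ => if_neg (not_lt.mpr (hcon i))
    rw [this] at h1
    norm_num at h1
  have hlt : specSum2 hA.1.eigenvalues μ < specSum2 hA.1.eigenvalues μ₀ := by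
    unfold specSum2
    obtain ⟨j, hj⟩ := hex
    refine Finset.sum_lt_sum (fun i _ => ?_) ⟨j, Finset.mem_univ _, ?_⟩
    · split_ifs with h
      · exact (hterm i h).le
      · exact le_rfl
    · rw [if_pos hj, if_pos hj]
      exact hterm j hj
  have hpos : 0 < 1 - (q : ℝ)⁻¹ * (Matrix.trace (A ^ 2 * ((A + (μ : ℂ) • 1) ^ 2)⁻¹)).re := by
    rw [hT]
    have := mul_lt_mul_of_pos_left hlt (inv_pos.mpr hqpos)
    linarith [hμ₀.2]
  have hden : lam + (q : ℝ)⁻¹ * (μ ^ 2 * (Matrix.trace (A * ((A + (μ : ℂ) • 1) ^ 2)⁻¹)).re)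
      = μ * (1 - (q : ℝ)⁻¹ * (Matrix.trace (A ^ 2 * ((A + (μ : ℂ) • 1) ^ 2)⁻¹)).re) := by
    have hdet := (Matrix.isUnit_iff_isUnit_det _).mp hU
    have key : A * (A + (μ : ℂ) • 1)⁻¹ = A ^ 2 * ((A + (μ : ℂ) • 1) ^ 2)⁻¹
        + (μ : ℂ) • (A * ((A + (μ : ℂ) • 1) ^ 2)⁻¹) := by
      have h1 : A ^ 2 + (μ : ℂ) • A = A * (A + (μ : ℂ) • 1) := by
        rw [Matrix.mul_add, pow_two]
        simp
      rw [← Matrix.smul_mul, ← Matrix.add_mul, h1, pow_two (A + (μ : ℂ) • 1), Matrix.mul_inv_rev,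
        Matrix.mul_assoc, Matrix.mul_nonsing_inv_cancel_left _ _ hdet]
    rw [hlam, key, Matrix.trace_add, Matrix.trace_smul, smul_eq_mul, Complex.add_re,
      Complex.re_ofReal_mul]
    ring
  have hfac : μ' = ((q : ℝ)⁻¹ * (μ ^ 2 *
          (Matrix.trace ((A + (μ : ℂ) • 1)⁻¹ * Psi * (A + (μ : ℂ) • 1)⁻¹)).re))
        * (1 - (q : ℝ)⁻¹ * (Matrix.trace (A ^ 2 * ((A + (μ : ℂ) • 1) ^ 2)⁻¹)).re)⁻¹ := by
    rw [hμ', hden]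
    have := hpos.ne'
    generalize (1 - (q : ℝ)⁻¹ * (Matrix.trace (A ^ 2 * ((A + (μ : ℂ) • 1) ^ 2)⁻¹)).re) = d at *
    field_simp
  refine ⟨hden, ?_, hfac, ?_⟩
  · rw [hden]
    exact mul_ne_zero hμne hpos.ne'
  · rw [hfac]
    have hH : (A + (μ : ℂ) • (1 : Matrix (Fin p) (Fin p) ℂ)).IsHermitian := by
      refine hA.1.add ?_
      simp [Matrix.IsHermitian, Matrix.conjTranspose_smul]
    have hps := hPsi.conjTranspose_mul_mul_same (A + (μ : ℂ) • 1)⁻¹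
    rw [hH.inv.eq] at hps
    have htr := (Complex.le_def.mp hps.trace_nonneg).1
    rw [Complex.zero_re] at htr
    have := inv_pos.mpr hpos
    positivity
end

section
/- Let A ∈ ℂ^{p×p} be a nonzero positive semidefinite matrix and let q be such that q > p · r(A), where r(A) = rank(A)/p. Let μ₀ be the unique solution in (−λ_min⁺(A), ∞) of 1 = (1/q) Σ_{i: λ_i(A)>0} λ_i(A)²/(λ_i(A)+μ₀)². Then (p·r(A)/q − 1)·λ_max(A) < (√(p·r(A)/q) − 1)·λ_max(A) ≤ μ₀ ≤ (√(p·r(A)/q) − 1)·λ_min⁺(A) < 0. -/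
open Matrix Filter
open scoped ComplexOrder

theorem aux18 {ι : Type*} (S : Finset ι) (hS : S.Nonempty) (e : ι → ℝ) (m M μ q : ℝ)
    (hm : 0 < m) (he : ∀ i ∈ S, m ≤ e i ∧ e i ≤ M) (hμ : -m < μ) (hq : (S.card : ℝ) < q)
    (hsum : ∑ i ∈ S, (e i) ^ 2 / (e i + μ) ^ 2 = q) :
    ((S.card : ℝ) / q - 1) * M < (Real.sqrt ((S.card : ℝ) / q) - 1) * M
    ∧ (Real.sqrt ((S.card : ℝ) / q) - 1) * M ≤ μ
    ∧ μ ≤ (Real.sqrt ((S.card : ℝ) / q) - 1) * m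
    ∧ (Real.sqrt ((S.card : ℝ) / q) - 1) * m < 0 := by
  have hr : (0 : ℝ) < S.card := by exact_mod_cast hS.card_pos
  have hq0 : 0 < q := hr.trans hq
  have hM : 0 < M := by
    obtain ⟨i, hi⟩ := hS
    linarith [he i hi]
  have hs2 : Real.sqrt ((S.card : ℝ) / q) ^ 2 = (S.card : ℝ) / q := Real.sq_sqrt (by positivity)
  have hs0 : 0 < Real.sqrt ((S.card : ℝ) / q) := Real.sqrt_pos.2 (by positivity)
  have hd : (S.card : ℝ) / q < 1 := (div_lt_one hq0).2 hq
  set s := Real.sqrt ((S.card : ℝ) / q)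
  have hs1 : s < 1 := by nlinarith
  have hinv : ∑ i ∈ S, 1 / s ^ 2 = q := by
    rw [Finset.sum_const, nsmul_eq_mul, hs2]
    field_simp
  refine ⟨?_, ?_, ?_, ?_⟩
  · rw [← hs2]
    nlinarith [mul_pos hM (mul_pos hs0 (sub_pos.2 hs1))]
  · by_contra! h
    have : ∑ i ∈ S, 1 / s ^ 2 < ∑ i ∈ S, (e i) ^ 2 / (e i + μ) ^ 2 := by
      apply Finset.sum_lt_sum_of_nonempty hS
      intro i hi
      obtain ⟨h1, h2⟩ := he i hi
      have h3 : 0 < e i + μ := by linarith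
      have h4 : e i + μ < s * e i := by nlinarith
      rw [div_lt_div_iff₀ (by positivity) (by positivity), one_mul, ← mul_pow, mul_comm]
      exact pow_lt_pow_left₀ h4 h3.le two_ne_zero
    linarith
  · by_contra! h
    have : ∑ i ∈ S, (e i) ^ 2 / (e i + μ) ^ 2 < ∑ i ∈ S, 1 / s ^ 2 := by
      apply Finset.sum_lt_sum_of_nonempty hS
      intro i hi
      obtain ⟨h1, h2⟩ := he i hi
      have h3 : 0 < e i + μ := by linarith
      have h4 : s * e i < e i + μ := by nlinarith
      rw [div_lt_div_iff₀ (by positivity) (by positivity), one_mul, ← mul_pow, mul_comm]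
      exact pow_lt_pow_left₀ h4 (mul_nonneg hs0.le (by linarith)) two_ne_zero
    linarith
  · nlinarith

/-- Bounds on `μ₀` for sketch size exceeding the rank (from the proof of Theorem 3.1):
`(p r(A)/q - 1) λ_max(A) < (√(p r(A)/q) - 1) λ_max(A) ≤ μ₀ ≤ (√(p r(A)/q) - 1) λ_min⁺(A)
< 0`. -/
theorem stmt18 {p : ℕ} (A : Matrix (Fin p) (Fin p) ℂ)
    (hA : A.PosSemidef) (hA0 : A ≠ 0)
    (q : ℕ) (hq : (A.rank : ℝ) < q) (μ₀ : ℝ)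
    (hμ₀ : -(lminp hA.1) < μ₀ ∧ 1 = (q : ℝ)⁻¹ * specSum2 hA.1.eigenvalues μ₀) :
    ((A.rank : ℝ) / q - 1) * (⨆ i, hA.1.eigenvalues i)
        < (Real.sqrt ((A.rank : ℝ) / q) - 1) * (⨆ i, hA.1.eigenvalues i)
    ∧ (Real.sqrt ((A.rank : ℝ) / q) - 1) * (⨆ i, hA.1.eigenvalues i) ≤ μ₀
    ∧ μ₀ ≤ (Real.sqrt ((A.rank : ℝ) / q) - 1) * lminp hA.1
    ∧ (Real.sqrt ((A.rank : ℝ) / q) - 1) * lminp hA.1 < 0 := by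
  set e := hA.1.eigenvalues with hedef
  have hnn : ∀ i, 0 ≤ e i := hA.eigenvalues_nonneg
  let S : Finset (Fin p) := Finset.univ.filter (fun i => 0 < e i)
  have hcard : A.rank = S.card := by
    rw [hA.1.rank_eq_card_non_zero_eigs, Fintype.card_subtype]
    congr 1
    ext i
    simp only [S, Finset.mem_filter, Finset.mem_univ, true_and]
    exact ⟨fun h => lt_of_le_of_ne (hnn i) (Ne.symm h), fun h => h.ne'⟩
  have hS : S.Nonempty := by
    by_contra hne
    have hz : hA.1.eigenvalues = 0 := by
      funext i
      by_contra h
      exact hne ⟨i, Finset.mem_filter.2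
        ⟨Finset.mem_univ i, lt_of_le_of_ne (hnn i) (Ne.symm h)⟩⟩
    exact hA0 (hA.1.eigenvalues_eq_zero_iff.1 hz)
  have hset : {x : ℝ | 0 < x ∧ ∃ i, hA.1.eigenvalues i = x} = e '' (S : Set (Fin p)) := by
    ext x
    simp only [S, Set.mem_ofPred_eq, Set.mem_image, Finset.coe_filter, Finset.mem_univ, true_and]
    constructor
    · rintro ⟨h, i, rfl⟩
      exact ⟨i, h, rfl⟩
    · rintro ⟨i, h, rfl⟩
      exact ⟨h, i, rfl⟩
  have hfin : (e '' (S : Set (Fin p))).Finite := S.finite_toSet.image e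
  have hl : lminp hA.1 = sInf (e '' (S : Set (Fin p))) := by rw [lminp, hset]
  have hmem : lminp hA.1 ∈ e '' (S : Set (Fin p)) := by
    rw [hl]
    exact Set.Nonempty.csInf_mem (hS.to_set.image e) hfin
  have hm : 0 < lminp hA.1 := by
    rw [← hset] at hmem
    exact hmem.1
  obtain ⟨h1, h2⟩ := hμ₀
  have hr : (0 : ℝ) ≤ A.rank := Nat.cast_nonneg _
  have hq0 : (q : ℝ) ≠ 0 := ne_of_gt (lt_of_le_of_lt hr hq)
  rw [hcard] at hq ⊢
  refine aux18 S hS e _ _ μ₀ q hm ?_ h1 hq ?_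
  · intro i hi
    refine ⟨?_, le_ciSup (Set.finite_range e).bddAbove i⟩
    rw [hl]
    exact csInf_le hfin.bddBelow ⟨i, hi, rfl⟩
  · rw [specSum2, ← Finset.sum_filter] at h2
    field_simp at h2
    exact h2.symm
end
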